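/- Let p be a strictly pseudoconvex boundary point of class C² of a domain Ω in ℂⁿ. Then for every η > 0 there exists a neighborhood U of p such that for every z ∈ Ω ∩ U and every X ∈ ℂⁿ, (1 − η)·M(z;X) ≤ κ_Ω(z;X) ≤ (1 + η)·M(z;X), where M(z;X) = ( |⟨∂δ_Ω(z),X⟩|²/δ_Ω(z)² + L(z;X)/δ_Ω(z) )^{1/2}. -/

import Mathlib

open Metric MeasureTheory Set
open scoped NNReal ENNReal

noncomputable section

/-- Complex Euclidean `n`-space. -/
abbrev Cn (n : ℕ) := EuclideanSpace ℂ (Fin n)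

variable {n : ℕ}

instance : MeasurableSpace (Cn n) := borel _
instance : BorelSpace (Cn n) := ⟨rfl⟩
instance : InnerProductSpace ℝ (Cn n) := InnerProductSpace.rclikeToReal ℂ _

/-- `δ_Ω(z)`: the Euclidean distance from `z` to the boundary of `Ω`. -/
def bdist (Ω : Set (Cn n)) (z : Cn n) : ℝ := Metric.infDist z (frontier Ω)

/-- The squeezing function `σ_Ω(z)` of a (bounded) domain `Ω`. -/
def squeezing (Ω : Set (Cn n)) (z : Cn n) : ℝ :=
  sSup {r : ℝ | 0 < r ∧ ∃ f : Cn n → Cn n,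
    DifferentiableOn ℂ f Ω ∧ Set.InjOn f Ω ∧ Set.MapsTo f Ω (Metric.ball 0 1) ∧
    f z = 0 ∧ Metric.ball (0 : Cn n) r ⊆ f '' Ω}

/-- The Kobayashi metric `κ_Ω(z;X)`. -/
def kobayashi (Ω : Set (Cn n)) (z X : Cn n) : ℝ :=
  sInf {r : ℝ | ∃ (α : ℂ) (φ : ℂ → Cn n),
    DifferentiableOn ℂ φ (Metric.ball 0 1) ∧ Set.MapsTo φ (Metric.ball 0 1) Ω ∧
    φ 0 = z ∧ α • deriv φ 0 = X ∧ r = ‖α‖}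

/-- The Carathéodory metric `γ_Ω(z;X)`. -/
def caratheodory (Ω : Set (Cn n)) (z X : Cn n) : ℝ :=
  sSup {r : ℝ | ∃ f : Cn n → ℂ,
    DifferentiableOn ℂ f Ω ∧ Set.MapsTo f Ω (Metric.ball 0 1) ∧
    r = ‖fderiv ℂ f z X‖}

/-- `⟨∂ρ(q),X⟩ = Σ_j (∂ρ/∂z_j)(q) X_j`, expressed via the real differential:
`⟨∂ρ(q),X⟩ = (Dρ(q)X - i·Dρ(q)(iX))/2`. -/
def cderiv (ρ : Cn n → ℝ) (q X : Cn n) : ℂ :=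
  (((fderiv ℝ ρ q X : ℝ) : ℂ) - Complex.I * ((fderiv ℝ ρ q (Complex.I • X) : ℝ) : ℂ)) / 2

/-- The Levi form `L_ρ(q;X) = Σ_{j,k} (∂²ρ/∂z_j∂z̄_k)(q) X_j X̄_k`, expressed via the real
second differential: `L_ρ(q;X) = (D²ρ(q)[X,X] + D²ρ(q)[iX,iX])/4`. -/
def leviForm (ρ : Cn n → ℝ) (q X : Cn n) : ℝ :=
  (fderiv ℝ (fun w => fderiv ℝ ρ w X) q X
    + fderiv ℝ (fun w => fderiv ℝ ρ w (Complex.I • X)) q (Complex.I • X)) / 4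

/-- `p` is a strictly pseudoconvex boundary point of `Ω` of class `C^{m,ε}`. -/
def IsStrictPscPtHolder (Ω : Set (Cn n)) (p : Cn n) (m : ℕ) (ε : ℝ) : Prop :=
  p ∈ frontier Ω ∧ ∃ W : Set (Cn n), IsOpen W ∧ p ∈ W ∧ ∃ ρ : Cn n → ℝ,
    ContDiffOn ℝ m ρ W ∧
    (∃ C : ℝ≥0, HolderOnWith C ε.toNNReal (iteratedFDeriv ℝ m ρ) W) ∧
    Ω ∩ W = {z ∈ W | ρ z < 0} ∧
    (∀ q ∈ frontier Ω ∩ W, fderiv ℝ ρ q ≠ 0) ∧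
    (∀ q ∈ frontier Ω ∩ W, ∀ X : Cn n, X ≠ 0 → cderiv ρ q X = 0 → 0 < leviForm ρ q X)

/-- `p` is a strictly pseudoconvex boundary point of `Ω` of class `C²`. -/
def IsStrictPscPtC2 (Ω : Set (Cn n)) (p : Cn n) : Prop :=
  p ∈ frontier Ω ∧ ∃ W : Set (Cn n), IsOpen W ∧ p ∈ W ∧ ∃ ρ : Cn n → ℝ,
    ContDiffOn ℝ 2 ρ W ∧
    Ω ∩ W = {z ∈ W | ρ z < 0} ∧
    (∀ q ∈ frontier Ω ∩ W, fderiv ℝ ρ q ≠ 0) ∧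
    (∀ q ∈ frontier Ω ∩ W, ∀ X : Cn n, X ≠ 0 → cderiv ρ q X = 0 → 0 < leviForm ρ q X)

/-- An open set `D ⊆ ℂⁿ` is pseudoconvex: `u = -log dist(·, Dᶜ)` is plurisubharmonic on `D`. -/
def IsPseudoconvex (D : Set (Cn n)) : Prop :=
  IsOpen D ∧
  UpperSemicontinuousOn (fun z => -Real.log (Metric.infDist z Dᶜ)) D ∧
  ∀ a ∈ D, ∀ w : Cn n, ∀ r : ℝ, 0 < r →
    (∀ l : ℂ, ‖l‖ ≤ r → a + l • w ∈ D) →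
    -Real.log (Metric.infDist a Dᶜ) ≤
      (1 / (2 * Real.pi)) * ∫ θ in (0:ℝ)..(2 * Real.pi),
        -Real.log (Metric.infDist (a + ((r : ℂ) * Complex.exp (θ * Complex.I)) • w) Dᶜ)

/-- `cl(Ω)` admits a Stein neighborhood basis. -/
def HasSteinBasis (Ω : Set (Cn n)) : Prop :=
  ∀ W : Set (Cn n), IsOpen W → closure Ω ⊆ W →
    ∃ U : Set (Cn n), IsPseudoconvex U ∧ closure Ω ⊆ U ∧ U ⊆ W

/-- The squared `L²`-norm of `f` on `D` (as an extended nonnegative real). -/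
def L2normSq (D : Set (Cn n)) (f : Cn n → ℂ) : ℝ≥0∞ := ∫⁻ w in D, (‖f w‖₊ : ℝ≥0∞) ^ 2

/-- `J⁰_D(z) = sup {|f(z)|² : f ∈ L²_h(D), ‖f‖_D ≤ 1}`; equals the Bergman kernel on the
diagonal. -/
def J0 (D : Set (Cn n)) (z : Cn n) : ℝ :=
  sSup {v : ℝ | ∃ f : Cn n → ℂ, DifferentiableOn ℂ f D ∧ L2normSq D f ≤ 1 ∧ v = ‖f z‖ ^ 2}

/-- `J¹_D(z;X) = sup {|f'(z)X|² : f ∈ L²_h(D), ‖f‖_D ≤ 1, f(z) = 0}`. -/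
def J1 (D : Set (Cn n)) (z X : Cn n) : ℝ :=
  sSup {v : ℝ | ∃ f : Cn n → ℂ, DifferentiableOn ℂ f D ∧ L2normSq D f ≤ 1 ∧ f z = 0 ∧
    v = ‖fderiv ℂ f z X‖ ^ 2}

/-- `J²_D(z;X,Y) = sup {|Σ_{j,k} f_{ζ_jζ_k}(z) X_j Y_k|² : f ∈ L²_h(D), ‖f‖_D ≤ 1,
f(z) = 0, f'(z) = 0}`. -/
def J2 (D : Set (Cn n)) (z X Y : Cn n) : ℝ :=
  sSup {v : ℝ | ∃ f : Cn n → ℂ, DifferentiableOn ℂ f D ∧ L2normSq D f ≤ 1 ∧ f z = 0 ∧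
    fderiv ℂ f z = 0 ∧ v = ‖fderiv ℂ (fun w => fderiv ℂ f w Y) z X‖ ^ 2}

/-- The Bergman metric `β_D(z;X) = (J¹_D(z;X)/J⁰_D(z))^{1/2}`. -/
def bergman (D : Set (Cn n)) (z X : Cn n) : ℝ := Real.sqrt (J1 D z X / J0 D z)

/-- The bisectional curvature of the Bergman metric. -/
def bisect (D : Set (Cn n)) (z X Y : Cn n) : ℝ :=
  2 - J0 D z * J2 D z X Y / (J1 D z X * J1 D z Y)

/-- The holomorphic sectional curvature `s_D(z;X)` of the Bergman metric. -/
def sectCurv (D : Set (Cn n)) (z X : Cn n) : ℝ := bisect D z X X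

/-- The Ricci curvature `r_D(z;X)` of the Bergman metric (w.r.t. the standard basis). -/
def ricciCurv (D : Set (Cn n)) (z X : Cn n) : ℝ :=
  ∑ j : Fin n, bisect D z (EuclideanSpace.single j 1) X

/-- The scalar curvature `t_D(z)` of the Bergman metric. -/
def scalarCurv (D : Set (Cn n)) (z : Cn n) : ℝ :=
  ∑ j : Fin n, ricciCurv D z (EuclideanSpace.single j 1)

/-- `M(z;X) = ( |⟨∂δ_Ω(z),X⟩|²/δ_Ω(z)² + L(z;X)/δ_Ω(z) )^{1/2}`, where `L` is the Levi form
of `-δ_Ω`. -/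
def Mfun (Ω : Set (Cn n)) (z X : Cn n) : ℝ :=
  Real.sqrt (‖cderiv (bdist Ω) z X‖ ^ 2 / (bdist Ω z) ^ 2
    + leviForm (fun w => -(bdist Ω w)) z X / bdist Ω z)

/-- The sesquilinear form of the Bergman metric, recovered from `β²` by polarization. -/
def bergForm (D : Set (Cn n)) (z X Y : Cn n) : ℂ :=
  (((J1 D z (X + Y) / J0 D z : ℝ) : ℂ) - ((J1 D z (X - Y) / J0 D z : ℝ) : ℂ)
    + Complex.I * ((J1 D z (X + Complex.I • Y) / J0 D z : ℝ) : ℂ)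
    - Complex.I * ((J1 D z (X - Complex.I • Y) / J0 D z : ℝ) : ℂ)) / 4

/-- The Hermitian matrix `(B_{jk}(z))` of the Bergman metric in the standard coordinates. -/
def bergMat (D : Set (Cn n)) (z : Cn n) : Matrix (Fin n) (Fin n) ℂ :=
  fun j k => bergForm D z (EuclideanSpace.single j 1) (EuclideanSpace.single k 1)

/-- The canonical Bergman invariant `J_D(z) = Δ_D(z)/K_D(z)`. -/
def canonInvariant (D : Set (Cn n)) (z : Cn n) : ℂ :=
  (bergMat D z).det / ((J0 D z : ℝ) : ℂ)

/-!
Solving `z = y + c ν(y)` with `y` in the boundary and `ν` its outer unit normal gives a signed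
distance `r = c` with `∇r = ν ∘ y`, so `r` is again of class `C²`, and `r = -δ` inside `Ω`. For
large `A` the function `r + A r²` is strictly plurisubharmonic, and its model metric is
asymptotically that of `r`; so let `r` be strictly plurisubharmonic from now on.

Lower bound: the Levi polynomial of `r` at `p` is a holomorphic peak function, which forces a disc
in `Ω` centred near `p` to stay near `p` on a slightly smaller disc. There Taylor's formula at `z`,
with the Levi form minorized by the square of a supporting complex-linear functional, maps the disc
into a Siegel half-space `{2 Re u + |v|² < 1}`, and the Schwarz lemma at its origin applies.

Upper bound: the extremal discs of the Siegel half-space are shrunk slightly, and bent by a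
quadratic shear which cancels the holomorphic Hessian of `r`. They then stay inside `Ω`, since the
remaining second-order error is small compared with the gain from shrinking.
-/

open Filter Topology
open scoped Gradient

section SignedDistance

section Basic

theorem apply_eq_zero_of_mem_frontier {X : Type*} [TopologicalSpace X] {Ω : Set X} {r : X → ℝ}
    {p : X} (hr : ContinuousAt r p) (hmem : ∀ᶠ z in 𝓝 p, z ∈ Ω ↔ r z < 0) (hp : p ∈ frontier Ω) :
    r p = 0 := by
  by_contra hne
  rcases lt_or_gt_of_ne hne with hneg | hpos
  · refine hp.2 (mem_interior_iff_mem_nhds.2 ?_)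
    filter_upwards [hmem, hr.eventually_lt_const hneg] with z hz hlt using hz.2 hlt
  · refine (mem_closure_iff_frequently.1 hp.1) ?_
    filter_upwards [hmem, hr.eventually_const_lt hpos] with z hz hlt hzΩ
    exact (hz.1 hzΩ).not_gt hlt

variable {E : Type*} [NormedAddCommGroup E] [NormedSpace ℝ E]

/-- `r` is a local `C²` defining function of `Ω` at the boundary point `p`; only the germ of `r` at
`p` matters. -/
structure IsDefiningFunctionAt (Ω : Set E) (r : E → ℝ) (p : E) : Prop where
  contDiffAt : ContDiffAt ℝ 2 r p
  apply_self : r p = 0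
  mem_iff : ∀ᶠ z in 𝓝 p, z ∈ Ω ↔ r z < 0
  fderiv_ne_zero : fderiv ℝ r p ≠ 0

variable {Ω : Set E} {r : E → ℝ} {p : E}

theorem mem_frontier_of_apply_eq_zero (hmem : ∀ᶠ z in 𝓝 p, z ∈ Ω ↔ r z < 0)
    (hr0 : fderiv ℝ r p ≠ 0) (hp : r p = 0) : p ∈ frontier Ω := by
  refine ⟨?_, fun hpint => ?_⟩
  · by_contra hcl
    have hout : ∀ᶠ z in 𝓝 p, z ∉ Ω := by simpa [mem_closure_iff_frequently] using hcl
    have hmin : IsLocalMin r p := by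
      filter_upwards [hout, hmem] with z hz hiff
      rw [hp]
      exact not_lt.1 (hz ∘ hiff.2)
    exact hr0 hmin.fderiv_eq_zero
  · exact (hmem.self_of_nhds.1 (interior_subset hpint)).ne hp

namespace IsDefiningFunctionAt

theorem eventually_contDiffAt (h : IsDefiningFunctionAt Ω r p) : ∀ᶠ z in 𝓝 p, ContDiffAt ℝ 2 r z :=
  h.contDiffAt.eventually (by simp)

theorem contDiffAt_fderiv (h : IsDefiningFunctionAt Ω r p) : ContDiffAt ℝ 1 (fderiv ℝ r) p :=
  h.contDiffAt.fderiv_right (by norm_num)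

theorem eventually_fderiv_ne_zero (h : IsDefiningFunctionAt Ω r p) :
    ∀ᶠ z in 𝓝 p, fderiv ℝ r z ≠ 0 :=
  h.contDiffAt_fderiv.continuousAt.eventually_ne h.fderiv_ne_zero

theorem eventually_mem_frontier_iff (h : IsDefiningFunctionAt Ω r p) :
    ∀ᶠ z in 𝓝 p, z ∈ frontier Ω ↔ r z = 0 := by
  filter_upwards [h.mem_iff.eventually_nhds, h.eventually_contDiffAt, h.eventually_fderiv_ne_zero]
    with z hmem hr hr0
  exact ⟨apply_eq_zero_of_mem_frontier hr.continuousAt hmem, mem_frontier_of_apply_eq_zero hmem hr0⟩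

theorem mem_frontier (h : IsDefiningFunctionAt Ω r p) : p ∈ frontier Ω :=
  h.eventually_mem_frontier_iff.self_of_nhds.2 h.apply_self

end IsDefiningFunctionAt

end Basic

section UnitNormal

variable {E : Type*} [NormedAddCommGroup E] [InnerProductSpace ℝ E] [CompleteSpace E]
  {ρ : E → ℝ} {p : E}

/-- The unit normal `∇ρ / ‖∇ρ‖` to the level sets of `ρ` (zero at critical points). -/
def unitNormal (ρ : E → ℝ) (z : E) : E := ‖∇ ρ z‖⁻¹ • ∇ ρ z

theorem gradient_ne_zero_iff : ∇ ρ p ≠ 0 ↔ fderiv ℝ ρ p ≠ 0 := by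
  simp [gradient]

theorem contDiffAt_gradient (hρ : ContDiffAt ℝ 2 ρ p) : ContDiffAt ℝ 1 (∇ ρ) p :=
  (InnerProductSpace.toDual ℝ E).symm.toContinuousLinearEquiv.contDiff.contDiffAt.comp p
    (hρ.fderiv_right (by norm_num))

theorem contDiffAt_unitNormal (hρ : ContDiffAt ℝ 2 ρ p) (hp : fderiv ℝ ρ p ≠ 0) :
    ContDiffAt ℝ 1 (unitNormal ρ) p := by
  have hg := contDiffAt_gradient hρ
  have hg0 := gradient_ne_zero_iff.2 hp
  exact ((hg.norm ℝ hg0).inv (norm_ne_zero_iff.2 hg0)).smul hg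

theorem norm_unitNormal (hp : fderiv ℝ ρ p ≠ 0) : ‖unitNormal ρ p‖ = 1 := by
  simpa [unitNormal] using norm_smul_inv_norm (𝕜 := ℝ) (gradient_ne_zero_iff.2 hp)

theorem inner_unitNormal_left (v : E) :
    inner ℝ (unitNormal ρ p) v = ‖∇ ρ p‖⁻¹ * fderiv ℝ ρ p v := by
  simp [unitNormal, inner_smul_left]

theorem fderiv_apply_eq_norm_gradient_mul_inner (hp : fderiv ℝ ρ p ≠ 0) (v : E) :
    fderiv ℝ ρ p v = ‖∇ ρ p‖ * inner ℝ (unitNormal ρ p) v := by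
  rw [inner_unitNormal_left, mul_inv_cancel_left₀ (norm_ne_zero_iff.2 (gradient_ne_zero_iff.2 hp))]

theorem fderiv_unitNormal_self (hp : fderiv ℝ ρ p ≠ 0) :
    fderiv ℝ ρ p (unitNormal ρ p) = ‖∇ ρ p‖ := by
  rw [fderiv_apply_eq_norm_gradient_mul_inner hp, real_inner_self_eq_norm_sq, norm_unitNormal hp,
    one_pow, mul_one]

theorem inner_fderiv_unitNormal_self (hρ : ContDiffAt ℝ 2 ρ p) (hp : fderiv ℝ ρ p ≠ 0) (v : E) :
    inner ℝ (unitNormal ρ p) (fderiv ℝ (unitNormal ρ) p v) = 0 := by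
  have hν := ((contDiffAt_unitNormal hρ hp).differentiableAt one_ne_zero).hasFDerivAt
  have hone : HasFDerivAt (fun z => ‖unitNormal ρ z‖ ^ 2) (0 : E →L[ℝ] ℝ) p := by
    refine (hasFDerivAt_const (1 : ℝ) p).congr_of_eventuallyEq ?_
    have hfd : ContinuousAt (fderiv ℝ ρ) p := (hρ.fderiv_right (m := 1) (by norm_num)).continuousAt
    filter_upwards [hfd.eventually_ne hp] with z hz
    rw [norm_unitNormal hz, one_pow]
  simpa using DFunLike.congr_fun (hν.norm_sq.unique hone) v

theorem inner_fderiv_unitNormal_of_tangent (hρ : ContDiffAt ℝ 2 ρ p) (hp : fderiv ℝ ρ p ≠ 0)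
    (X : E) {Y : E} (hY : fderiv ℝ ρ p Y = 0) :
    inner ℝ (fderiv ℝ (unitNormal ρ) p X) Y = ‖∇ ρ p‖⁻¹ * fderiv ℝ (fderiv ℝ ρ) p X Y := by
  have hg := contDiffAt_gradient hρ
  have hg0 := gradient_ne_zero_iff.2 hp
  have hn := (((hg.norm ℝ hg0).inv (norm_ne_zero_iff.2 hg0)).differentiableAt
    one_ne_zero).hasFDerivAt
  have hD := ((hρ.fderiv_right (m := 1) (by norm_num)).differentiableAt one_ne_zero).hasFDerivAt
  have hν := ((contDiffAt_unitNormal hρ hp).differentiableAt one_ne_zero).hasFDerivAt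
  have hinner := hν.inner ℝ (hasFDerivAt_const Y p)
  have hprod := hn.mul (hD.clm_apply (hasFDerivAt_const Y p))
  have hEq := hinner.unique
    (hprod.congr_of_eventuallyEq (.of_forall fun z => inner_unitNormal_left (ρ := ρ) (p := z) Y))
  simpa [hY] using DFunLike.congr_fun hEq X

end UnitNormal

section NormalCoordinates

theorem exists_contDiffAt_local_inverse {F : Type*} [NormedAddCommGroup F] [NormedSpace ℝ F]
    [CompleteSpace F] {G : F → F} {G' : F ≃L[ℝ] F} {a : F} (hG : ContDiffAt ℝ 1 G a)
    (hG' : HasFDerivAt G (G' : F →L[ℝ] F) a) :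
    ∃ H : F → F, ContDiffAt ℝ 1 H (G a) ∧ H (G a) = a ∧ (∀ᶠ y in 𝓝 (G a), G (H y) = y) ∧
      ∀ᶠ x in 𝓝 a, H (G x) = x := by
  have hstrict : HasStrictFDerivAt G (G' : F →L[ℝ] F) a :=
    hG.hasStrictFDerivAt' hG' one_ne_zero
  exact ⟨hstrict.localInverse, hG.to_localInverse hG' one_ne_zero, hstrict.localInverse_apply_image,
    hstrict.eventually_right_inverse, hstrict.eventually_left_inverse⟩

variable {E : Type*} [NormedAddCommGroup E] [InnerProductSpace ℝ E] [CompleteSpace E]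
  {ρ : E → ℝ} {p : E} {q : E → E} {s : E → ℝ}

/-- Normal coordinates near a regular point `p` of the hypersurface `{ρ = 0}`: every `z` near `p`
is uniquely `q z + s z • ν (q z)` with `q z` on the hypersurface and `ν` the unit normal, so that
`q` is the foot of the perpendicular from `z` and `s` the signed distance. -/
structure IsNormalCoordinates (ρ : E → ℝ) (p : E) (q : E → E) (s : E → ℝ) : Prop where
  contDiffAt_foot : ContDiffAt ℝ 1 q p
  contDiffAt_dist : ContDiffAt ℝ 1 s p
  foot_self : q p = p
  dist_self : s p = 0
  foot_add : ∀ᶠ z in 𝓝 p, q z + s z • unitNormal ρ (q z) = z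
  apply_foot : ∀ᶠ z in 𝓝 p, ρ (q z) = 0
  unique : ∀ᶠ x : E × ℝ in 𝓝 (p, 0), ρ x.1 = 0 →
    q (x.1 + x.2 • unitNormal ρ x.1) = x.1 ∧ s (x.1 + x.2 • unitNormal ρ x.1) = x.2

/-- The derivative at `(p, 0)` of `(y, c) ↦ (y + c • ν y, ρ y)`, with its explicit inverse. -/
def normalMapDeriv (hp : fderiv ℝ ρ p ≠ 0) : (E × ℝ) ≃L[ℝ] (E × ℝ) :=
  ContinuousLinearEquiv.equivOfInverse
    ((ContinuousLinearMap.fst ℝ E ℝ +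
        (ContinuousLinearMap.snd ℝ E ℝ).smulRight (unitNormal ρ p)).prod
      ((fderiv ℝ ρ p).comp (ContinuousLinearMap.fst ℝ E ℝ)))
    (let c : E × ℝ →L[ℝ] ℝ := (innerSL ℝ (unitNormal ρ p)).comp (ContinuousLinearMap.fst ℝ E ℝ) -
        ‖∇ ρ p‖⁻¹ • ContinuousLinearMap.snd ℝ E ℝ
     (ContinuousLinearMap.fst ℝ E ℝ - c.smulRight (unitNormal ρ p)).prod c)
    (fun x => by
      ext <;> simp [inner_add_right, inner_smul_right, norm_unitNormal hp, ← inner_unitNormal_left])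
    (fun x => by
      have := norm_ne_zero_iff.2 (gradient_ne_zero_iff.2 hp)
      ext
      · simp
      · simp [fderiv_unitNormal_self hp, inner_unitNormal_left]
        field_simp
        ring)

theorem hasFDerivAt_normalMap (hρ : ContDiffAt ℝ 2 ρ p) (hp : fderiv ℝ ρ p ≠ 0) :
    HasFDerivAt (fun x : E × ℝ => (x.1 + x.2 • unitNormal ρ x.1, ρ x.1))
      (normalMapDeriv hp : E × ℝ →L[ℝ] E × ℝ) (p, 0) := by
  have hν := ((contDiffAt_unitNormal hρ hp).differentiableAt one_ne_zero).hasFDerivAt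
  have hρ' := (hρ.differentiableAt two_ne_zero).hasFDerivAt
  have hfst := hasFDerivAt_fst (𝕜 := ℝ) (p := (p, (0 : ℝ)))
  have hsnd := hasFDerivAt_snd (𝕜 := ℝ) (p := (p, (0 : ℝ)))
  refine ((hfst.add (hsnd.smul (hν.comp (p, (0 : ℝ)) hfst))).prodMk
    (hρ'.comp (p, (0 : ℝ)) hfst)).congr_fderiv ?_
  ext <;> simp [normalMapDeriv]

theorem contDiffAt_normalMap (hρ : ContDiffAt ℝ 2 ρ p) (hp : fderiv ℝ ρ p ≠ 0) :
    ContDiffAt ℝ 1 (fun x : E × ℝ => (x.1 + x.2 • unitNormal ρ x.1, ρ x.1)) (p, 0) := by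
  have hν : ContDiffAt ℝ 1 (fun x : E × ℝ => unitNormal ρ x.1) (p, 0) :=
    (contDiffAt_unitNormal hρ hp).comp (p, (0 : ℝ)) contDiffAt_fst
  exact (contDiffAt_fst.add (contDiffAt_snd.smul hν)).prodMk
    ((hρ.of_le one_le_two).comp (p, (0 : ℝ)) contDiffAt_fst)

theorem exists_isNormalCoordinates (hρ : ContDiffAt ℝ 2 ρ p) (hp : fderiv ℝ ρ p ≠ 0)
    (hρp : ρ p = 0) : ∃ q s, IsNormalCoordinates ρ p q s := by
  obtain ⟨H, hH, hHp, hGH, hHG⟩ :=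
    exists_contDiffAt_local_inverse (contDiffAt_normalMap hρ hp) (hasFDerivAt_normalMap hρ hp)
  simp only [zero_smul, add_zero, hρp] at hH hHp hGH hHG
  have hin : ContDiffAt ℝ 1 (fun z : E => (z, (0 : ℝ))) p := contDiffAt_id.prodMk contDiffAt_const
  have hHin : ContDiffAt ℝ 1 (fun z => H (z, 0)) p := hH.comp p hin
  have hGHin := hin.continuousAt.eventually hGH
  refine ⟨fun z => (H (z, 0)).1, fun z => (H (z, 0)).2, hHin.fst, hHin.snd, by simp [hHp],
    by simp [hHp], ?_, ?_, ?_⟩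
  · filter_upwards [hGHin] with z hz using congrArg Prod.fst hz
  · filter_upwards [hGHin] with z hz using congrArg Prod.snd hz
  · filter_upwards [hHG] with x hx hx0
    rw [hx0] at hx
    simp [hx]

namespace IsNormalCoordinates

theorem tendsto_foot (h : IsNormalCoordinates ρ p q s) : Tendsto q (𝓝 p) (𝓝 p) := by
  simpa only [h.foot_self] using h.contDiffAt_foot.continuousAt.tendsto

theorem eventually_fderiv_foot (h : IsNormalCoordinates ρ p q s) (hρ : ContDiffAt ℝ 2 ρ p) :
    ∀ᶠ z in 𝓝 p, ∀ v, fderiv ℝ ρ (q z) (fderiv ℝ q z v) = 0 := by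
  filter_upwards [h.contDiffAt_foot.eventually (by simp),
    h.tendsto_foot.eventually (hρ.eventually (by simp)), h.apply_foot.eventually_nhds]
    with z hq hρq h0 v
  have hcomp := (hρq.differentiableAt two_ne_zero).hasFDerivAt.comp z
    (hq.differentiableAt one_ne_zero).hasFDerivAt
  have hzero : HasFDerivAt (ρ ∘ q) (0 : E →L[ℝ] ℝ) z :=
    (hasFDerivAt_const (0 : ℝ) z).congr_of_eventuallyEq h0
  simpa using DFunLike.congr_fun (hcomp.unique hzero) v

theorem eventually_hasFDerivAt (h : IsNormalCoordinates ρ p q s) (hρ : ContDiffAt ℝ 2 ρ p)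
    (hp : fderiv ℝ ρ p ≠ 0) :
    ∀ᶠ z in 𝓝 p, HasFDerivAt s (innerSL ℝ (unitNormal ρ (q z))) z := by
  have hfd : ContinuousAt (fderiv ℝ ρ) p := (hρ.fderiv_right (m := 1) (by norm_num)).continuousAt
  filter_upwards [h.contDiffAt_foot.eventually (by simp), h.contDiffAt_dist.eventually (by simp),
    h.tendsto_foot.eventually (hρ.eventually (by simp)),
    h.tendsto_foot.eventually (hfd.eventually_ne hp), h.eventually_fderiv_foot hρ,
    h.foot_add.eventually_nhds] with z hq hs hρq hρ0 htan hadd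
  have hq' := (hq.differentiableAt one_ne_zero).hasFDerivAt
  have hs' := (hs.differentiableAt one_ne_zero).hasFDerivAt
  have hν' := ((contDiffAt_unitNormal hρq hρ0).differentiableAt one_ne_zero).hasFDerivAt.comp z hq'
  have hid : HasFDerivAt (fun y => q y + s y • (unitNormal ρ ∘ q) y)
      (ContinuousLinearMap.id ℝ E) z := (hasFDerivAt_id z).congr_of_eventuallyEq hadd
  refine hs'.congr_fderiv (ContinuousLinearMap.ext fun v => ?_)
  have hsplit := DFunLike.congr_fun ((hq'.add (hs'.smul hν')).unique hid) v
  have hinner := congrArg (inner ℝ (unitNormal ρ (q z))) hsplit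
  simpa [inner_add_right, inner_smul_right, inner_fderiv_unitNormal_self hρq hρ0,
    inner_unitNormal_left (ρ := ρ) (p := q z) (fderiv ℝ q z v), htan, real_inner_self_eq_norm_sq,
    norm_unitNormal hρ0] using hinner

theorem contDiffAt_two_dist (h : IsNormalCoordinates ρ p q s) (hρ : ContDiffAt ℝ 2 ρ p)
    (hp : fderiv ℝ ρ p ≠ 0) : ContDiffAt ℝ 2 s p := by
  have hν : ContDiffAt ℝ 1 (fun z => innerSL ℝ (unitNormal ρ (q z))) p := by
    refine (innerSL ℝ).contDiff.contDiffAt.comp p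
      (ContDiffAt.comp p (g := unitNormal ρ) ?_ h.contDiffAt_foot)
    rw [h.foot_self]
    exact contDiffAt_unitNormal hρ hp
  exact (contDiffAt_succ_iff_hasFDerivAt (𝕜 := ℝ) (n := 1)).2
    ⟨_, ⟨_, h.eventually_hasFDerivAt hρ hp, fun _ hx => hx⟩, hν⟩

theorem fderiv_dist_self (h : IsNormalCoordinates ρ p q s) (hρ : ContDiffAt ℝ 2 ρ p)
    (hp : fderiv ℝ ρ p ≠ 0) : fderiv ℝ s p = ‖∇ ρ p‖⁻¹ • fderiv ℝ ρ p := by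
  rw [(h.eventually_hasFDerivAt hρ hp).self_of_nhds.fderiv, h.foot_self]
  ext v
  simp [inner_unitNormal_left]

theorem fderiv_foot_of_tangent (h : IsNormalCoordinates ρ p q s) (hρ : ContDiffAt ℝ 2 ρ p)
    (hp : fderiv ℝ ρ p ≠ 0) {X : E} (hX : fderiv ℝ ρ p X = 0) : fderiv ℝ q p X = X := by
  have hq' := (h.contDiffAt_foot.differentiableAt one_ne_zero).hasFDerivAt
  have hs' := (h.contDiffAt_dist.differentiableAt one_ne_zero).hasFDerivAt
  have hν' : HasFDerivAt (unitNormal ρ ∘ q) _ p :=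
    ((h.foot_self.symm ▸ contDiffAt_unitNormal hρ hp :
      ContDiffAt ℝ 1 (unitNormal ρ) (q p)).differentiableAt one_ne_zero).hasFDerivAt.comp p hq'
  have hid : HasFDerivAt (fun y => q y + s y • (unitNormal ρ ∘ q) y)
      (ContinuousLinearMap.id ℝ E) p := (hasFDerivAt_id p).congr_of_eventuallyEq h.foot_add
  simpa [h.dist_self, h.fderiv_dist_self hρ hp, hX] using
    DFunLike.congr_fun ((hq'.add (hs'.smul hν')).unique hid) X

theorem fderiv_fderiv_dist_of_tangent (h : IsNormalCoordinates ρ p q s) (hρ : ContDiffAt ℝ 2 ρ p)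
    (hp : fderiv ℝ ρ p ≠ 0) {X Y : E} (hX : fderiv ℝ ρ p X = 0) (hY : fderiv ℝ ρ p Y = 0) :
    fderiv ℝ (fderiv ℝ s) p X Y = ‖∇ ρ p‖⁻¹ * fderiv ℝ (fderiv ℝ ρ) p X Y := by
  have hν' :
      HasFDerivAt (unitNormal ρ ∘ q) ((fderiv ℝ (unitNormal ρ) p).comp (fderiv ℝ q p)) p := by
    refine HasFDerivAt.comp p ?_ (h.contDiffAt_foot.differentiableAt one_ne_zero).hasFDerivAt
    rw [h.foot_self]
    exact ((contDiffAt_unitNormal hρ hp).differentiableAt one_ne_zero).hasFDerivAt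
  have hs' : fderiv ℝ s =ᶠ[𝓝 p] innerSL ℝ ∘ unitNormal ρ ∘ q := by
    filter_upwards [h.eventually_hasFDerivAt hρ hp] with z hz using hz.fderiv
  rw [hs'.fderiv_eq, ((innerSL ℝ).hasFDerivAt.comp p hν').fderiv,
    ← inner_fderiv_unitNormal_of_tangent hρ hp X hY, ContinuousLinearMap.comp_apply,
    ContinuousLinearMap.comp_apply, h.fderiv_foot_of_tangent hρ hp hX]
  rfl

theorem eventually_neg_iff (h : IsNormalCoordinates ρ p q s) (hρ : ContDiffAt ℝ 2 ρ p)
    (hp : fderiv ℝ ρ p ≠ 0) : ∀ᶠ z in 𝓝 p, ρ z < 0 ↔ s z < 0 := by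
  have hpos : 0 < ‖∇ ρ p‖ := norm_pos_iff.2 (gradient_ne_zero_iff.2 hp)
  have hnear : ∀ᶠ z in 𝓝 p, ‖ρ z - ρ (q z) - fderiv ℝ ρ p (z - q z)‖ ≤ ‖∇ ρ p‖ / 2 * ‖z - q z‖ :=
    (tendsto_id.prodMk_nhds h.tendsto_foot).eventually
      ((hρ.hasStrictFDerivAt two_ne_zero).isLittleO.def (half_pos hpos))
  have hslope : ∀ᶠ z in 𝓝 p, ‖∇ ρ p‖ / 2 < fderiv ℝ ρ p (unitNormal ρ (q z)) := by
    have hlim := (fderiv ℝ ρ p).continuous.continuousAt.tendsto.comp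
      ((contDiffAt_unitNormal hρ hp).continuousAt.tendsto.comp h.tendsto_foot)
    refine hlim.eventually_const_lt ?_
    rw [fderiv_unitNormal_self hp]
    exact half_lt_self hpos
  have hfd : ContinuousAt (fderiv ℝ ρ) p := (hρ.fderiv_right (m := 1) (by norm_num)).continuousAt
  filter_upwards [hnear, hslope, h.foot_add, h.apply_foot,
    h.tendsto_foot.eventually (hfd.eventually_ne hp)] with z hz hσ hadd h0 hne
  rw [sub_eq_of_eq_add' hadd.symm, h0, map_smul, norm_smul, norm_unitNormal hne, sub_zero, mul_one,
    smul_eq_mul, Real.norm_eq_abs, Real.norm_eq_abs, abs_le] at hz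
  rcases lt_or_ge (s z) 0 with hs | hs
  · rw [abs_of_neg hs] at hz
    exact iff_of_true (by nlinarith) hs
  · rw [abs_of_nonneg hs] at hz
    exact iff_of_false (not_lt.2 (by nlinarith)) hs.not_gt

end IsNormalCoordinates

end NormalCoordinates

section Distance

variable {E : Type*} [NormedAddCommGroup E] [InnerProductSpace ℝ E]

theorem exists_eq_add_smul_unitNormal_of_isLocalMinOn_dist [CompleteSpace E] {ρ : E → ℝ} {y z : E}
    (hρ : ContDiffAt ℝ 1 ρ y) (hy : fderiv ℝ ρ y ≠ 0)
    (hmin : IsLocalMinOn (fun x => dist z x) {x | ρ x = ρ y} y) :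
    ∃ c : ℝ, |c| = dist z y ∧ z = y + c • unitNormal ρ y := by
  have hminSq : IsLocalMinOn (fun x => ‖z - x‖ ^ 2) {x | ρ x = ρ y} y := by
    filter_upwards [hmin] with x hx
    simp only [dist_eq_norm] at hx
    gcongr
  have hsq : HasStrictFDerivAt (fun x => ‖z - x‖ ^ 2) _ y :=
    (hasStrictFDerivAt_norm_sq (z - y)).comp y
      ((hasStrictFDerivAt_const z y).sub (hasStrictFDerivAt_id y))
  obtain ⟨a, b, hab, hzero⟩ := IsLocalExtrOn.exists_multipliers_of_hasStrictFDerivAt_1d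
    (Or.inl hminSq) (hρ.hasStrictFDerivAt one_ne_zero) hsq
  have hmul : a • fderiv ℝ ρ y = (2 * b) • innerSL ℝ (z - y) := by
    ext v
    have := DFunLike.congr_fun hzero v
    simp at this ⊢
    linarith
  have hb : 2 * b ≠ 0 := by
    intro hb
    rw [hb, zero_smul, smul_eq_zero, or_iff_left hy] at hmul
    simp_all
  have hgrad : z - y = (a / (2 * b) * ‖∇ ρ y‖) • unitNormal ρ y := by
    refine ext_inner_right ℝ fun v => ?_
    have := DFunLike.congr_fun hmul v
    rw [smul_apply, smul_apply, fderiv_apply_eq_norm_gradient_mul_inner hy, innerSL_apply_apply,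
      smul_eq_mul, smul_eq_mul] at this
    refine mul_left_cancel₀ hb (this.symm.trans ?_)
    have := right_ne_zero_of_mul hb
    rw [real_inner_smul_left]
    field_simp
  refine ⟨a / (2 * b) * ‖∇ ρ y‖, ?_, by rw [← hgrad, add_sub_cancel]⟩
  rw [dist_eq_norm, hgrad, norm_smul, norm_unitNormal hy, mul_one, Real.norm_eq_abs]

theorem eventually_forall_of_dist_le {X : Type*} [PseudoMetricSpace X] {P : X → Prop} {p : X}
    (h : ∀ᶠ y in 𝓝 p, P y) : ∀ᶠ z in 𝓝 p, ∀ y, dist z y ≤ dist z p → P y := by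
  obtain ⟨e, he, hP⟩ := Metric.eventually_nhds_iff.1 h
  filter_upwards [ball_mem_nhds p (half_pos he)] with z hz y hy
  have := dist_triangle_left y p z
  exact hP (by linarith [mem_ball.1 hz])

theorem IsNormalCoordinates.eventually_infDist_frontier [ProperSpace E] {Ω : Set E} {ρ : E → ℝ}
    {p : E} {q : E → E} {s : E → ℝ} (h : IsNormalCoordinates ρ p q s)
    (hdef : IsDefiningFunctionAt Ω ρ p) : ∀ᶠ z in 𝓝 p, infDist z (frontier Ω) = |s z| := by
  obtain ⟨ε, hε, hball⟩ := Metric.eventually_nhds_iff.1 h.unique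
  filter_upwards [ball_mem_nhds p hε, eventually_forall_of_dist_le (ball_mem_nhds p hε),
    eventually_forall_of_dist_le hdef.eventually_mem_frontier_iff.eventually_nhds,
    eventually_forall_of_dist_le hdef.eventually_contDiffAt,
    eventually_forall_of_dist_le hdef.eventually_fderiv_ne_zero] with z hzp hyp hfr hρ hρ0
  obtain ⟨y, hy, hzy⟩ := isClosed_frontier.exists_infDist_eq_dist ⟨p, hdef.mem_frontier⟩ z
  have hle : dist z y ≤ dist z p := hzy ▸ infDist_le_dist_of_mem hdef.mem_frontier
  have hy0 : ρ y = 0 := (hfr y hle).self_of_nhds.1 hy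
  have hmin : IsLocalMinOn (fun x => dist z x) {x | ρ x = ρ y} y := by
    filter_upwards [nhdsWithin_le_nhds (hfr y hle), self_mem_nhdsWithin] with x hx hxy
    exact hzy ▸ infDist_le_dist_of_mem (hx.2 (hxy.trans hy0))
  obtain ⟨c, hc, hz⟩ := exists_eq_add_smul_unitNormal_of_isLocalMinOn_dist
    ((hρ y hle).of_le one_le_two) (hρ0 y hle) hmin
  have hmem : dist (y, c) (p, (0 : ℝ)) < ε := by
    rw [Prod.dist_eq, max_lt_iff, Real.dist_eq, sub_zero, hc]
    exact ⟨hyp y hle, hle.trans_lt hzp⟩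
  have hsz : s z = c := by
    conv_lhs => rw [hz]
    exact (hball hmem hy0).2
  rw [hzy, hsz, hc]

theorem exists_isDefiningFunctionAt_infDist_frontier [ProperSpace E] {Ω : Set E} {ρ : E → ℝ} {p : E}
    (hρ : IsDefiningFunctionAt Ω ρ p) :
    ∃ r : E → ℝ, IsDefiningFunctionAt Ω r p ∧
      (∀ᶠ z in 𝓝 p, z ∈ Ω → infDist z (frontier Ω) = -r z) ∧
      ∃ l > (0 : ℝ), fderiv ℝ r p = l • fderiv ℝ ρ p ∧
        ∀ X Y, fderiv ℝ ρ p X = 0 → fderiv ℝ ρ p Y = 0 →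
          fderiv ℝ (fderiv ℝ r) p X Y = l * fderiv ℝ (fderiv ℝ ρ) p X Y := by
  have hC2 := hρ.contDiffAt
  have hp := hρ.fderiv_ne_zero
  obtain ⟨q, s, h⟩ := exists_isNormalCoordinates hC2 hp hρ.apply_self
  have hl : 0 < ‖∇ ρ p‖⁻¹ := inv_pos.2 (norm_pos_iff.2 (gradient_ne_zero_iff.2 hp))
  have hsign : ∀ᶠ z in 𝓝 p, z ∈ Ω ↔ s z < 0 := by
    filter_upwards [hρ.mem_iff, h.eventually_neg_iff hC2 hp] with z h₁ h₂ using h₁.trans h₂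
  refine ⟨s, ⟨h.contDiffAt_two_dist hC2 hp, h.dist_self, hsign, ?_⟩, ?_, ‖∇ ρ p‖⁻¹, hl,
    h.fderiv_dist_self hC2 hp, fun X Y hX hY => h.fderiv_fderiv_dist_of_tangent hC2 hp hX hY⟩
  · rw [h.fderiv_dist_self hC2 hp]
    exact smul_ne_zero hl.ne' hp
  · filter_upwards [hsign, h.eventually_infDist_frontier hρ] with z hz hdist hzΩ
    rw [hdist, abs_of_neg (hz.1 hzΩ)]

end Distance

end SignedDistance

section Taylor

variable {E : Type*} [NormedAddCommGroup E] [NormedSpace ℝ E]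

theorem hasFDerivAt_taylorRemainder {r : E → ℝ} {H : E →L[ℝ] E →L[ℝ] ℝ} (hH : ∀ v w, H v w = H w v)
    (L : E →L[ℝ] ℝ) (z : E) {x : E} (hr : DifferentiableAt ℝ r x) :
    HasFDerivAt (fun x => r x - L x - H (x - z) (x - z) / 2) (fderiv ℝ r x - L - H (x - z)) x := by
  have hsub : HasFDerivAt (fun x => x - z) (ContinuousLinearMap.id ℝ E) x :=
    (hasFDerivAt_id x).sub_const z
  have hquad := ((H.hasFDerivAt.comp x hsub).clm_apply hsub).mul_const (2⁻¹ : ℝ)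
  refine ((hr.hasFDerivAt.sub L.hasFDerivAt).sub hquad).congr_fderiv ?_
  ext v
  simp [hH v]
  ring

theorem exists_forall_mem_ball_abs_taylor_two_le {r : E → ℝ} {p : E} (hr : ContDiffAt ℝ 2 r p)
    {ε : ℝ} (hε : 0 < ε) :
    ∃ R > 0, ∀ z ∈ ball p R, ∀ w ∈ ball p R,
      |r w - r z - fderiv ℝ r z (w - z) - fderiv ℝ (fderiv ℝ r) p (w - z) (w - z) / 2|
        ≤ ε * ‖w - z‖ ^ 2 := by
  have hfd : ContDiffAt ℝ 1 (fderiv ℝ r) p := hr.fderiv_right (by norm_num)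
  have hsymm : IsSymmSndFDerivAt ℝ r p := hr.isSymmSndFDerivAt (by simp)
  have hstrict := (hfd.hasStrictFDerivAt one_ne_zero).isLittleO.def hε
  rw [nhds_prod_eq] at hstrict
  obtain ⟨u, hu, hclose⟩ := eventually_prod_self_iff'.1 hstrict
  obtain ⟨R, hR, hball⟩ := Metric.mem_nhds_iff.1 (inter_mem hu (hr.eventually (by simp)))
  refine ⟨R, hR, fun z hz w hw => ?_⟩
  set H := fderiv ℝ (fderiv ℝ r) p
  have hseg := (convex_ball p R).segment_subset hz hw
  have hderiv : ∀ x ∈ segment ℝ z w, HasFDerivWithinAt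
      (fun x => r x - fderiv ℝ r z x - H (x - z) (x - z) / 2)
      (fderiv ℝ r x - fderiv ℝ r z - H (x - z)) (segment ℝ z w) x := fun x hx =>
    (hasFDerivAt_taylorRemainder hsymm _ z
      (ContDiffAt.differentiableAt (n := 2) (hball (hseg hx)).2 two_ne_zero)).hasFDerivWithinAt
  have hbound : ∀ x ∈ segment ℝ z w,
      ‖fderiv ℝ r x - fderiv ℝ r z - H (x - z)‖ ≤ ε * ‖w - z‖ := fun x hx =>
    (hclose x (hball (hseg hx)).1 z (hball hz).1).trans
      (mul_le_mul_of_nonneg_left (norm_sub_le_of_mem_segment hx) (by positivity))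
  calc |r w - r z - fderiv ℝ r z (w - z) - H (w - z) (w - z) / 2|
      = ‖(r w - fderiv ℝ r z w - H (w - z) (w - z) / 2)
          - (r z - fderiv ℝ r z z - H (z - z) (z - z) / 2)‖ := by
        rw [Real.norm_eq_abs]
        congr 1
        simp
        ring
    _ ≤ ε * ‖w - z‖ * ‖w - z‖ :=
        (convex_segment z w).norm_image_sub_le_of_norm_hasFDerivWithin_le hderiv hbound
          (left_mem_segment ℝ z w) (right_mem_segment ℝ z w)
    _ = ε * ‖w - z‖ ^ 2 := by ring

end Taylor

section DiscLocalization

variable {E : Type*} [NormedAddCommGroup E]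

theorem exists_pos_lt_mul_lt (B : ℝ) {c d : ℝ} (hc : 0 < c) (hd : 0 < d) :
    ∃ x > 0, x < c ∧ B * x < d := by
  have hmul : Tendsto (fun x : ℝ => B * x) (𝓝[>] 0) (𝓝 0) :=
    tendsto_nhdsWithin_of_tendsto_nhds (Continuous.tendsto' (by fun_prop) _ _ (mul_zero B))
  have hIoo : ∀ᶠ x in 𝓝[>] (0 : ℝ), x ∈ Ioo 0 c := Ioo_mem_nhdsGT hc
  obtain ⟨x, ⟨hx0, hxc⟩, hx⟩ := (hIoo.and (hmul.eventually_lt_const hd)).exists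
  exact ⟨x, hx0, hxc, hx⟩

theorem exists_pos_mul_exp_lt_mul_exp {r₁ r₂ a b : ℝ} (hr₁ : 0 < r₁) (hr₂ : 0 < r₂) (hab : b < a) :
    ∃ A > 0, r₂ * Real.exp (-(A * a)) < r₁ * Real.exp (-(A * b)) := by
  have hab' : 0 < a - b := sub_pos.2 hab
  refine ⟨r₂ / r₁ / (a - b), by positivity, ?_⟩
  have hexponent : -(r₂ / r₁ / (a - b) * b) = r₂ / r₁ + -(r₂ / r₁ / (a - b) * a) := by
    field_simp
    ring
  rw [hexponent, Real.exp_add, ← mul_assoc, mul_comm r₁]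
  refine mul_lt_mul_of_pos_right ?_ (Real.exp_pos _)
  rw [← div_lt_iff₀ hr₁]
  exact (lt_add_one _).trans_le (Real.add_one_le_exp _)

theorem exists_mem_Ioo_norm_apply_mul_sub_eq {φ : ℂ → E} (hφ : ContinuousOn φ (ball 0 1)) {ζ : ℂ}
    (hζ : ζ ∈ ball 0 1) {ρ : ℝ} (hρ : 0 < ρ) (hρζ : ρ < ‖φ ζ - φ 0‖) :
    ∃ t ∈ Ioo (0 : ℝ) 1, ‖φ (t * ζ) - φ 0‖ = ρ := by
  have hray : MapsTo (fun t : ℝ => (t : ℂ) * ζ) (Icc 0 1) (ball 0 1) := fun t ht => by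
    rw [mem_ball_zero_iff, norm_mul, Complex.norm_real, Real.norm_of_nonneg ht.1]
    exact (mul_le_of_le_one_left (norm_nonneg _) ht.2).trans_lt (mem_ball_zero_iff.1 hζ)
  have hcont : ContinuousOn (fun t : ℝ => ‖φ (t * ζ) - φ 0‖) (Icc 0 1) :=
    ((hφ.comp (by fun_prop) hray).sub continuousOn_const).norm
  exact intermediate_value_Ioo zero_le_one hcont ⟨by simpa using hρ, by simpa using hρζ⟩

theorem exists_first_exit {F : Type*} [NormedAddCommGroup F] [NormedSpace ℝ F] [ProperSpace F]
    {u : F → ℝ} {s c : ℝ} (hu : ContinuousOn u (closedBall 0 s)) (hu0 : u 0 < c)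
    (hexit : ∃ x ∈ closedBall (0 : F) s, c ≤ u x) :
    ∃ a ∈ closedBall (0 : F) s, 0 < ‖a‖ ∧ c ≤ u a ∧ (∀ x ∈ ball (0 : F) ‖a‖, u x < c) ∧
      ∀ x ∈ closedBall (0 : F) ‖a‖, u x ≤ c := by
  have hcompact : IsCompact (closedBall (0 : F) s ∩ u ⁻¹' Ici c) :=
    (isCompact_closedBall _ _).of_isClosed_subset
      (hu.preimage_isClosed_of_isClosed isClosed_closedBall isClosed_Ici) inter_subset_left
  obtain ⟨a, ⟨has, hac⟩, hmin⟩ := hcompact.exists_isMinOn hexit continuous_norm.continuousOn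
  have ha : 0 < ‖a‖ := norm_pos_iff.2 fun h => hu0.not_ge (h ▸ hac)
  have hsub : closedBall (0 : F) ‖a‖ ⊆ closedBall 0 s :=
    closedBall_subset_closedBall (mem_closedBall_zero_iff.1 has)
  have hlt : ∀ x ∈ ball (0 : F) ‖a‖, u x < c := fun x hx => by
    by_contra! hcx
    exact (mem_ball_zero_iff.1 hx).not_ge (hmin ⟨hsub (ball_subset_closedBall hx), hcx⟩)
  refine ⟨a, has, ha, hac, hlt, fun x hx => ?_⟩
  rw [← closure_ball _ ha.ne'] at hx
  have hclosed : IsClosed (closedBall (0 : F) ‖a‖ ∩ u ⁻¹' Iic c) :=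
    (hu.mono hsub).preimage_isClosed_of_isClosed isClosed_closedBall isClosed_Iic
  have hball : ball (0 : F) ‖a‖ ⊆ closedBall (0 : F) ‖a‖ ∩ u ⁻¹' Iic c :=
    fun y hy => ⟨ball_subset_closedBall hy, (hlt y hy).le⟩
  exact (closure_minimal hball hclosed hx).2

theorem exists_norm_eq_and_norm_sub_eq {F : Type*} [NormedAddCommGroup F] [NormedSpace ℝ F]
    (a : F) {κ : ℝ} (hκ0 : 0 ≤ κ) (hκ1 : κ ≤ 1) :
    ∃ b : F, ‖b‖ = (1 - κ) * ‖a‖ ∧ ‖a - b‖ = κ * ‖a‖ := by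
  refine ⟨(1 - κ) • a, ?_, ?_⟩
  · rw [norm_smul, Real.norm_of_nonneg (sub_nonneg.2 hκ1)]
  · rw [sub_smul, one_smul, sub_sub_cancel, norm_smul, Real.norm_of_nonneg hκ0]

theorem exists_norm_le_of_norm_eq_or_norm_sub_eq {F : Type*} [NormedAddCommGroup F]
    [NormedSpace ℂ F] {g : ℂ → F} {φ : ℂ → E} (hg : DifferentiableOn ℂ g (ball 0 1))
    (hφ : ContinuousOn φ (ball 0 1)) {s ρ : ℝ} (hs0 : 0 < s) (hs : s < 1) (hρ : 0 < ρ) :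
    ∃ ζ : ℂ, ‖ζ‖ ≤ s ∧ ‖φ ζ - φ 0‖ ≤ ρ ∧ (‖ζ‖ = s ∨ ‖φ ζ - φ 0‖ = ρ) ∧
      ∀ ξ : ℂ, ‖ξ‖ < s → ‖φ ξ - φ 0‖ < ρ → ‖g ξ‖ ≤ ‖g ζ‖ := by
  set U : Set ℂ := ball 0 s ∩ φ ⁻¹' ball (φ 0) ρ
  have hball : closedBall (0 : ℂ) s ⊆ ball 0 1 := closedBall_subset_ball hs
  have hclosure : closure U ⊆ closedBall 0 s ∩ φ ⁻¹' closedBall (φ 0) ρ :=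
    closure_minimal (inter_subset_inter ball_subset_closedBall
      (preimage_mono ball_subset_closedBall))
      ((hφ.mono hball).preimage_isClosed_of_isClosed isClosed_closedBall isClosed_closedBall)
  have hopen : IsOpen U :=
    (hφ.mono (ball_subset_closedBall.trans hball)).isOpen_inter_preimage isOpen_ball isOpen_ball
  have h0 : (0 : ℂ) ∈ U := ⟨mem_ball_self hs0, mem_ball_self hρ⟩
  obtain ⟨ζ, hζ, hmax⟩ := Complex.exists_mem_frontier_isMaxOn_norm
    (isBounded_ball.subset inter_subset_left) ⟨0, h0⟩
    (hg.mono ((hclosure.trans inter_subset_left).trans hball)).diffContOnCl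
  obtain ⟨hζs, hζρ⟩ := hclosure (frontier_subset_closure hζ)
  rw [mem_closedBall_zero_iff] at hζs
  rw [mem_preimage, mem_closedBall, dist_eq_norm] at hζρ
  refine ⟨ζ, hζs, hζρ, ?_, fun ξ hξ hφξ => hmax (subset_closure
    ⟨mem_ball_zero_iff.2 hξ, by rwa [mem_preimage, mem_ball, dist_eq_norm]⟩)⟩
  by_contra! hne
  refine (hopen.frontier_eq ▸ hζ).2 ⟨mem_ball_zero_iff.2 (hζs.lt_of_ne hne.1), ?_⟩
  rw [mem_preimage, mem_ball, dist_eq_norm]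
  exact hζρ.lt_of_ne hne.2

variable [NormedSpace ℂ E]

/-- A quantitative holomorphic peak function for `Ω` at `p`: near `p` the function `h` vanishes at
`p` to first order, with constant `K`, and its real part is at most `-k * ‖w - p‖ ^ 2` on `Ω`. -/
structure IsLocalPeak (Ω : Set E) (p : E) (h : E → ℂ) (R k K : ℝ) : Prop where
  differentiable : Differentiable ℂ h
  radius_pos : 0 < R
  quad_pos : 0 < k
  lip_pos : 0 < K
  re_le : ∀ w ∈ Ω, w ∈ ball p R → (h w).re ≤ -k * ‖w - p‖ ^ 2
  norm_le : ∀ w ∈ ball p R, ‖h w‖ ≤ K * ‖w - p‖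

/-- The difference quotient of the disc `φ` at its centre, weighted by `exp (A * h)`; its norm
satisfies the maximum principle and is small where `φ` is far from the peak point of `h`. -/
def peakQuotient (h : E → ℂ) (A : ℝ) (φ : ℂ → E) (ζ : ℂ) : E :=
  Complex.exp (A * h (φ ζ)) • dslope φ 0 ζ

theorem norm_peakQuotient_zero (h : E → ℂ) (A : ℝ) (φ : ℂ → E) :
    ‖peakQuotient h A φ 0‖ = Real.exp (A * (h (φ 0)).re) * ‖deriv φ 0‖ := by
  rw [peakQuotient, norm_smul, Complex.norm_exp, dslope_same, Complex.re_ofReal_mul]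

theorem norm_peakQuotient_of_ne (h : E → ℂ) (A : ℝ) (φ : ℂ → E) {ζ : ℂ} (hζ : ζ ≠ 0) :
    ‖peakQuotient h A φ ζ‖ = ‖φ ζ - φ 0‖ * Real.exp (A * (h (φ ζ)).re) / ‖ζ‖ := by
  rw [peakQuotient, norm_smul, Complex.norm_exp, dslope_of_ne _ hζ, slope_def_module, norm_smul,
    norm_inv, sub_zero, Complex.re_ofReal_mul]
  ring

theorem differentiableOn_peakQuotient [CompleteSpace E] {h : E → ℂ} (hh : Differentiable ℂ h)
    (A : ℝ) {φ : ℂ → E} (hφ : DifferentiableOn ℂ φ (ball 0 1)) :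
    DifferentiableOn ℂ (peakQuotient h A φ) (ball 0 1) :=
  ((hh.comp_differentiableOn hφ).const_mul _).cexp.smul
    ((Complex.differentiableOn_dslope (ball_mem_nhds 0 one_pos)).2 hφ)

theorem norm_deriv_le_div_of_forall_norm_deriv_zero_le {Ω U : Set E} {B : ℝ}
    (hB : ∀ φ : ℂ → E, DifferentiableOn ℂ φ (ball 0 1) → MapsTo φ (ball 0 1) Ω → φ 0 ∈ U →
      ‖deriv φ 0‖ ≤ B)
    {φ : ℂ → E} (hφ : DifferentiableOn ℂ φ (ball 0 1)) (hmap : MapsTo φ (ball 0 1) Ω) {s : ℝ}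
    (hs : s < 1) {ζ : ℂ} (hζ : ζ ∈ closedBall 0 s) (hζU : φ ζ ∈ U) :
    ‖deriv φ ζ‖ ≤ B / (1 - s) := by
  have hs1 : 0 < 1 - s := sub_pos.2 hs
  have hnorm : ‖((1 - s : ℝ) : ℂ)‖ = 1 - s := by rw [Complex.norm_real, Real.norm_of_nonneg hs1.le]
  have haff : MapsTo (fun w : ℂ => ((1 - s : ℝ) : ℂ) * w + ζ) (ball 0 1) (ball 0 1) := by
    intro w hw
    rw [mem_ball_zero_iff] at hw ⊢
    calc ‖((1 - s : ℝ) : ℂ) * w + ζ‖ ≤ (1 - s) * ‖w‖ + ‖ζ‖ := by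
          simpa only [norm_mul, hnorm] using norm_add_le (((1 - s : ℝ) : ℂ) * w) ζ
      _ < (1 - s) * 1 + s := add_lt_add_of_lt_of_le (mul_lt_mul_of_pos_left hw hs1)
          (mem_closedBall_zero_iff.1 hζ)
      _ = 1 := by ring
  have hderiv :
      deriv (fun w => φ (((1 - s : ℝ) : ℂ) * w + ζ)) 0 = ((1 - s : ℝ) : ℂ) • deriv φ ζ := by
    rw [deriv_comp_mul_left ((1 - s : ℝ) : ℂ) (fun w => φ (w + ζ)) 0, deriv_comp_add_const,
      mul_zero, zero_add]
  have hbound := hB _ (hφ.comp (by fun_prop) haff) (hmap.comp haff) (by simpa using hζU)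
  rw [Function.comp_def, hderiv, norm_smul, hnorm] at hbound
  rwa [le_div_iff₀' hs1]

namespace IsLocalPeak

variable {Ω : Set E} {p : E} {h : E → ℂ} {R k K : ℝ} {φ : ℂ → E}

theorem neg_le_re (P : IsLocalPeak Ω p h R k K) {w : E} (hw : w ∈ ball p R) :
    -(K * ‖w - p‖) ≤ (h w).re :=
  (neg_le_neg (P.norm_le w hw)).trans (neg_le_of_abs_le (Complex.abs_re_le_norm _))

theorem re_nonpos (P : IsLocalPeak Ω p h R k K) {w : E} (hw : w ∈ Ω) (hwR : w ∈ ball p R) :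
    (h w).re ≤ 0 :=
  (P.re_le w hw hwR).trans (by nlinarith [P.quad_pos, sq_nonneg ‖w - p‖])

/-- If `φ` wanders a distance `ρ₂` away from its centre, then the weighted quotient is larger at an
earlier radius, where `φ` is only `ρ₁` away. -/
theorem exists_norm_peakQuotient_lt (P : IsLocalPeak Ω p h R k K)
    (hφ : ContinuousOn φ (ball 0 1)) (hmap : MapsTo φ (ball 0 1) Ω) {A ρ₁ ρ₂ : ℝ} (hA : 0 < A)
    (hρ₁ : 0 < ρ₁) (hρ : ρ₁ < ρ₂ / 2) (hρR : ρ₂ + ρ₁ ≤ R)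
    (hexp : ρ₂ * Real.exp (-(A * (k * (ρ₂ / 2) ^ 2))) < ρ₁ * Real.exp (-(A * (2 * K * ρ₁))))
    (h0 : ‖φ 0 - p‖ < ρ₁) {ζ : ℂ} (hζ : ζ ∈ ball 0 1) (hζρ : ‖φ ζ - φ 0‖ = ρ₂) :
    ∃ t ∈ Ioo (0 : ℝ) 1, ‖φ (t * ζ) - φ 0‖ = ρ₁ ∧
      ‖peakQuotient h A φ ζ‖ < ‖peakQuotient h A φ (t * ζ)‖ := by
  obtain ⟨t, ht, htρ⟩ := exists_mem_Ioo_norm_apply_mul_sub_eq hφ hζ hρ₁ (by linarith)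
  have hζ0 : 0 < ‖ζ‖ := norm_pos_iff.2 fun h => by simp [h] at hζρ; linarith
  have hnorm : ‖(t : ℂ) * ζ‖ = t * ‖ζ‖ := by
    rw [norm_mul, Complex.norm_real, Real.norm_of_nonneg ht.1.le]
  have htζ0 : 0 < ‖(t : ℂ) * ζ‖ := hnorm ▸ mul_pos ht.1 hζ0
  have hfar_ge : ρ₂ / 2 ≤ ‖φ ζ - p‖ := by
    linarith [norm_sub_le_norm_sub_add_norm_sub (φ ζ) p (φ 0), norm_sub_rev p (φ 0)]
  have hfar_le : ‖φ ζ - p‖ < R := by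
    linarith [norm_sub_le_norm_sub_add_norm_sub (φ ζ) (φ 0) p]
  have hnear_le : ‖φ (t * ζ) - p‖ ≤ 2 * ρ₁ := by
    linarith [norm_sub_le_norm_sub_add_norm_sub (φ (t * ζ)) (φ 0) p]
  have hfar : (h (φ ζ)).re ≤ -(k * (ρ₂ / 2) ^ 2) := by
    have hsq : k * (ρ₂ / 2) ^ 2 ≤ k * ‖φ ζ - p‖ ^ 2 :=
      mul_le_mul_of_nonneg_left (pow_le_pow_left₀ (by linarith) hfar_ge 2) P.quad_pos.le
    linarith [P.re_le _ (hmap hζ) (mem_ball_iff_norm.2 hfar_le)]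
  have hnear : -(2 * K * ρ₁) ≤ (h (φ (t * ζ))).re := by
    linarith [P.neg_le_re (mem_ball_iff_norm.2 (by linarith : ‖φ (t * ζ) - p‖ < R)),
      mul_le_mul_of_nonneg_left hnear_le P.lip_pos.le]
  refine ⟨t, ht, htρ, ?_⟩
  rw [norm_peakQuotient_of_ne h A φ (norm_pos_iff.1 hζ0),
    norm_peakQuotient_of_ne h A φ (norm_pos_iff.1 htζ0), hζρ, htρ, hnorm]
  have hρ₂ : 0 < ρ₂ := by linarith
  calc ρ₂ * Real.exp (A * (h (φ ζ)).re) / ‖ζ‖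
      ≤ ρ₂ * Real.exp (-(A * (k * (ρ₂ / 2) ^ 2))) / ‖ζ‖ := by
        rw [← mul_neg]
        gcongr
    _ < ρ₁ * Real.exp (-(A * (2 * K * ρ₁))) / ‖ζ‖ := by gcongr
    _ ≤ ρ₁ * Real.exp (A * (h (φ (t * ζ))).re) / (t * ‖ζ‖) := by
        rw [← mul_neg]
        gcongr
        · exact mul_pos ht.1 hζ0
        · exact mul_le_of_le_one_left hζ0.le ht.2.le

theorem exists_norm_deriv_zero_le [CompleteSpace E] (P : IsLocalPeak Ω p h R k K) :
    ∃ ρ > 0, ∃ B > 0, ∀ φ : ℂ → E, DifferentiableOn ℂ φ (ball 0 1) → MapsTo φ (ball 0 1) Ω →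
      φ 0 ∈ ball p ρ → ‖deriv φ 0‖ ≤ B := by
  have hR := P.radius_pos
  have hk := P.quad_pos
  obtain ⟨ρ, hρ, hρR, hρK⟩ : ∃ ρ > 0, ρ < R / 2 / 2 ∧ 2 * K * ρ < k * (R / 2 / 2) ^ 2 :=
    exists_pos_lt_mul_lt _ (by positivity) (by positivity)
  obtain ⟨A, hA, hexp⟩ := exists_pos_mul_exp_lt_mul_exp hρ (half_pos hR) hρK
  refine ⟨ρ, hρ, R * Real.exp (A * (K * ρ)), by positivity, fun φ hφ hmap h0 => ?_⟩
  rw [mem_ball, dist_eq_norm] at h0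
  obtain ⟨ζ, hζ, hζR, hor, hmax⟩ := exists_norm_le_of_norm_eq_or_norm_sub_eq
    (differentiableOn_peakQuotient P.differentiable A hφ) hφ.continuousOn one_half_pos
    one_half_lt_one (half_pos hR)
  have hζ1 : ζ ∈ ball 0 1 := mem_ball_zero_iff.2 (hζ.trans_lt one_half_lt_one)
  have hζnorm : ‖ζ‖ = 1 / 2 := hor.resolve_right fun heq => by
    obtain ⟨t, ht, htρ, hlt⟩ := P.exists_norm_peakQuotient_lt hφ.continuousOn hmap hA hρ hρR
      (by linarith) hexp h0 hζ1 heq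
    refine hlt.not_ge (hmax _ ?_ (by linarith))
    rw [norm_mul, Complex.norm_real, Real.norm_of_nonneg ht.1.le]
    nlinarith [ht.1, ht.2]
  have hζp : φ ζ ∈ ball p R := by
    rw [mem_ball, dist_eq_norm]
    linarith [norm_sub_le_norm_sub_add_norm_sub (φ ζ) (φ 0) p]
  have hweight : Real.exp (A * (h (φ ζ)).re) ≤ 1 :=
    Real.exp_le_one_iff.2 (mul_nonpos_of_nonneg_of_nonpos hA.le (P.re_nonpos (hmap hζ1) hζp))
  have hcentre : Real.exp (-(A * (K * ρ))) ≤ Real.exp (A * (h (φ 0)).re) := by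
    rw [← mul_neg]
    gcongr
    have hφ0 : φ 0 ∈ ball p R := mem_ball_iff_norm.2 (by linarith)
    linarith [P.neg_le_re hφ0, mul_le_mul_of_nonneg_left h0.le P.lip_pos.le]
  have hbound : Real.exp (-(A * (K * ρ))) * ‖deriv φ 0‖ ≤ R :=
    calc Real.exp (-(A * (K * ρ))) * ‖deriv φ 0‖
        ≤ Real.exp (A * (h (φ 0)).re) * ‖deriv φ 0‖ := by gcongr
      _ = ‖peakQuotient h A φ 0‖ := (norm_peakQuotient_zero h A φ).symm
      _ ≤ ‖peakQuotient h A φ ζ‖ := hmax 0 (by simp) (by simpa using hR)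
      _ = ‖φ ζ - φ 0‖ * Real.exp (A * (h (φ ζ)).re) / (1 / 2) := by
        rw [norm_peakQuotient_of_ne h A φ (norm_pos_iff.1 (by rw [hζnorm]; norm_num)), hζnorm]
      _ ≤ R / 2 * 1 / (1 / 2) := by gcongr
      _ = R := by ring
  rwa [Real.exp_neg, inv_mul_le_iff₀ (Real.exp_pos _), mul_comm] at hbound

theorem mul_norm_sub_sq_le (P : IsLocalPeak Ω p h R k K) {ρ V κ : ℝ} (hρ : 0 < ρ) (hV : 0 < V)
    (hκ : 0 < κ) (hφ : DifferentiableOn ℂ φ (ball 0 ρ)) (hmap : MapsTo φ (ball 0 ρ) (Ω ∩ ball p R))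
    (h0 : ‖φ 0 - p‖ ≤ V) {b : ℂ} (hb : ‖b‖ ≤ (1 - κ) * ρ) :
    k * ‖φ b - p‖ ^ 2 ≤ K * V * (1 + 2 / κ) := by
  have hK := P.lip_pos
  have hbρ : b ∈ ball 0 ρ := mem_ball_zero_iff.2 (by nlinarith)
  have h0h : ‖h (φ 0)‖ ≤ K * V :=
    (P.norm_le _ (hmap (mem_ball_self hρ)).2).trans (mul_le_mul_of_nonneg_left h0 hK.le)
  have hcar : ‖h (φ b) - h (φ 0)‖ ≤ 2 * (K * V) * ‖b‖ / (ρ - ‖b‖) := by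
    refine Complex.borelCaratheodory_zero (f := fun ζ => h (φ ζ) - h (φ 0)) (by positivity)
      ((P.differentiable.comp_differentiableOn hφ).sub_const _) (fun ζ hζ => ?_) hρ hbρ
      (sub_self _)
    simp only [mem_ofPred_eq, Complex.sub_re]
    linarith [P.re_nonpos (hmap hζ).1 (hmap hζ).2,
      neg_le_of_abs_le (Complex.abs_re_le_norm (h (φ 0)))]
  have hfrac : 2 * (K * V) * ‖b‖ / (ρ - ‖b‖) ≤ 2 * (K * V) * ρ / (κ * ρ) := by
    gcongr
    · exact (mem_ball_zero_iff.1 hbρ).le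
    · linarith
  calc k * ‖φ b - p‖ ^ 2 ≤ -(h (φ b)).re := by linarith [P.re_le _ (hmap hbρ).1 (hmap hbρ).2]
    _ ≤ ‖h (φ b)‖ := (neg_le_abs _).trans (Complex.abs_re_le_norm _)
    _ ≤ ‖h (φ 0)‖ + ‖h (φ b) - h (φ 0)‖ := norm_le_norm_add_norm_sub' _ _
    _ ≤ K * V + 2 * (K * V) * ρ / (κ * ρ) := add_le_add h0h (hcar.trans hfrac)
    _ = K * V * (1 + 2 / κ) := by field_simp

theorem exists_localization [CompleteSpace E] (P : IsLocalPeak Ω p h R k K) {s R₀ : ℝ}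
    (hs : s < 1) (hR₀ : 0 < R₀) :
    ∃ V > 0, ∀ φ : ℂ → E, DifferentiableOn ℂ φ (ball 0 1) → MapsTo φ (ball 0 1) Ω →
      φ 0 ∈ ball p V → ∀ ζ ∈ closedBall (0 : ℂ) s, φ ζ ∈ ball p R₀ := by
  obtain ⟨ρ, hρ, B, hB, hderiv⟩ := P.exists_norm_deriv_zero_le
  have hR := P.radius_pos
  have hk := P.quad_pos
  obtain ⟨R₁, hR₁, hlt⟩ := exists_between (lt_min hR₀ (lt_min hR hρ))
  obtain ⟨hR₁R₀, hR₁R, hR₁ρ⟩ : R₁ < R₀ ∧ R₁ < R ∧ R₁ < ρ := by simpa only [lt_min_iff] using hlt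
  obtain ⟨κ, hκ, hκ1, hκB⟩ := exists_pos_lt_mul_lt (B / (1 - s)) one_pos (half_pos hR₁)
  obtain ⟨V, hV, hVR₁, hVk⟩ : ∃ V > 0, V < R₁ ∧ K * (1 + 2 / κ) * V < k * (R₁ / 2) ^ 2 :=
    exists_pos_lt_mul_lt _ hR₁ (by positivity)
  refine ⟨V, hV, fun φ hφ hmap h0 => ?_⟩
  rw [mem_ball, dist_eq_norm] at h0
  suffices hin : ∀ ζ ∈ closedBall (0 : ℂ) s, ‖φ ζ - p‖ < R₁ from
    fun ζ hζ => mem_ball_iff_norm.2 ((hin ζ hζ).trans hR₁R₀)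
  by_contra! hexit
  have hs1 : closedBall (0 : ℂ) s ⊆ ball 0 1 := closedBall_subset_ball hs
  obtain ⟨a, has, ha, haR₁, hball, hcball⟩ := exists_first_exit (u := fun ζ => ‖φ ζ - p‖)
    ((hφ.continuousOn.mono hs1).sub continuousOn_const).norm (h0.trans hVR₁) hexit
  have ha1 : closedBall (0 : ℂ) ‖a‖ ⊆ closedBall 0 s :=
    closedBall_subset_closedBall (mem_closedBall_zero_iff.1 has)
  obtain ⟨b, hb, hab⟩ := exists_norm_eq_and_norm_sub_eq a hκ.le hκ1.le
  have hmean : ‖φ a - φ b‖ ≤ B / (1 - s) * ‖a - b‖ :=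
    (convex_closedBall (0 : ℂ) ‖a‖).norm_image_sub_le_of_norm_deriv_le
      (fun x hx => hφ.differentiableAt (isOpen_ball.mem_nhds (hs1 (ha1 hx))))
      (fun x hx => norm_deriv_le_div_of_forall_norm_deriv_zero_le hderiv hφ hmap hs (ha1 hx)
        (mem_ball_iff_norm.2 ((hcball x hx).trans_lt hR₁ρ)))
      (mem_closedBall_zero_iff.2 (by nlinarith)) (mem_closedBall_zero_iff.2 le_rfl)
  have hpeak : k * ‖φ b - p‖ ^ 2 ≤ K * V * (1 + 2 / κ) := by
    have hsub := ball_subset_closedBall.trans (ha1.trans hs1)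
    exact P.mul_norm_sub_sq_le ha hV hκ (hφ.mono hsub) (fun ζ hζ =>
      ⟨hmap (hsub hζ), mem_ball_iff_norm.2 ((hball ζ hζ).trans hR₁R)⟩) h0.le hb.le
  have hbR₁ : ‖φ b - p‖ < R₁ / 2 :=
    lt_of_pow_lt_pow_left₀ 2 (by positivity) (lt_of_mul_lt_mul_left (by linarith) hk.le)
  have hκa : ‖a - b‖ ≤ κ :=
    hab.trans_le (mul_le_of_le_one_right hκ.le ((mem_closedBall_zero_iff.1 has).trans hs.le))
  have hB' : B / (1 - s) * ‖a - b‖ ≤ B / (1 - s) * κ :=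
    mul_le_mul_of_nonneg_left hκa (div_nonneg hB.le (sub_nonneg.2 hs.le))
  linarith [norm_sub_le_norm_sub_add_norm_sub (φ a) (φ b) p]

end IsLocalPeak

end DiscLocalization

section SiegelHalfSpace

theorem norm_one_sub_sq (u : ℂ) : ‖1 - u‖ ^ 2 = 1 - 2 * u.re + ‖u‖ ^ 2 := by
  rw [← Complex.normSq_eq_norm_sq, ← Complex.normSq_eq_norm_sq, Complex.normSq_sub]
  simp only [map_one, Complex.mul_re, Complex.one_re, Complex.conj_re, Complex.one_im,
    Complex.conj_im]
  ring

theorem one_sub_ne_zero_of_normSq_le {u v : ℂ} (h : ‖v‖ ^ 2 ≤ 1 - 2 * u.re) : 1 - u ≠ 0 := by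
  intro h0
  rw [← sub_eq_zero.1 h0, Complex.one_re] at h
  linarith [sq_nonneg ‖v‖]

theorem norm_mul_add_mul_div_one_sub_le {u v : ℂ} (h : ‖v‖ ^ 2 ≤ 1 - 2 * u.re) (a b : ℂ) :
    ‖(a * u + b * v) / (1 - u)‖ ≤ √(‖a‖ ^ 2 + ‖b‖ ^ 2) := by
  have hne : 0 < ‖1 - u‖ := norm_pos_iff.2 (one_sub_ne_zero_of_normSq_le h)
  refine Real.le_sqrt_of_sq_le ?_
  rw [norm_div, div_pow, div_le_iff₀ (pow_pos hne 2)]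
  have triangle : ‖a * u + b * v‖ ≤ ‖a‖ * ‖u‖ + ‖b‖ * ‖v‖ :=
    (norm_add_le _ _).trans_eq (by rw [norm_mul, norm_mul])
  calc ‖a * u + b * v‖ ^ 2 ≤ (‖a‖ * ‖u‖ + ‖b‖ * ‖v‖) ^ 2 := by gcongr
    _ ≤ (‖a‖ ^ 2 + ‖b‖ ^ 2) * (‖u‖ ^ 2 + ‖v‖ ^ 2) := by
      linarith [sq_nonneg (‖a‖ * ‖v‖ - ‖b‖ * ‖u‖)]
    _ ≤ (‖a‖ ^ 2 + ‖b‖ ^ 2) * ‖1 - u‖ ^ 2 := by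
      rw [norm_one_sub_sq]
      exact mul_le_mul_of_nonneg_left (by linarith) (by positivity)

theorem norm_deriv_sq_add_norm_deriv_sq_le_one {u v : ℂ → ℂ}
    (hu : DifferentiableOn ℂ u (ball 0 1)) (hv : DifferentiableOn ℂ v (ball 0 1))
    (hu0 : u 0 = 0) (hv0 : v 0 = 0)
    (h : ∀ ζ ∈ ball (0 : ℂ) 1, ‖v ζ‖ ^ 2 ≤ 1 - 2 * (u ζ).re) :
    ‖deriv u 0‖ ^ 2 + ‖deriv v 0‖ ^ 2 ≤ 1 := by
  set x := deriv u 0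
  set y := deriv v 0
  set T := ‖x‖ ^ 2 + ‖y‖ ^ 2 with hT
  have hT0 : 0 ≤ T := by positivity
  have hne : ∀ ζ ∈ ball (0 : ℂ) 1, 1 - u ζ ≠ 0 := fun ζ hζ => one_sub_ne_zero_of_normSq_le (h ζ hζ)
  have h0 : (0 : ℂ) ∈ ball (0 : ℂ) 1 := mem_ball_self one_pos
  have hnhds := isOpen_ball.mem_nhds h0
  -- The Cayley transform of the Siegel half-space, followed by projection to the line of `(x, y)`.
  let F : ℂ → ℂ := fun ζ => ((starRingEnd ℂ) x * u ζ + (starRingEnd ℂ) y * v ζ) / (1 - u ζ)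
  have hF : DifferentiableOn ℂ F (ball 0 1) :=
    ((hu.const_mul _).add (hv.const_mul _)).div (hu.const_sub 1) hne
  have hF0 : F 0 = 0 := by simp only [F, hu0, hv0, mul_zero, add_zero, zero_div]
  have hmaps : MapsTo F (ball 0 1) (closedBall (F 0) √T) := fun ζ hζ => by
    simpa only [hF0, mem_closedBall_zero_iff, RCLike.norm_conj] using
      norm_mul_add_mul_div_one_sub_le (h ζ hζ) ((starRingEnd ℂ) x) ((starRingEnd ℂ) y)
  have hderiv : HasDerivAt F (T : ℂ) 0 := by
    have hdu : HasDerivAt u x 0 := (hu.differentiableAt hnhds).hasDerivAt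
    have hdv : HasDerivAt v y 0 := (hv.differentiableAt hnhds).hasDerivAt
    refine (((hdu.const_mul _).add (hdv.const_mul _)).div (hdu.const_sub 1)
      (hne 0 h0)).congr_deriv ?_
    simp [hu0, hv0, hT, ← Complex.normSq_eq_norm_sq, Complex.normSq_eq_conj_mul_self]
  have schwarz := Complex.norm_deriv_le_div_of_mapsTo_ball hF hmaps one_pos
  rw [hderiv.deriv, Complex.norm_real, Real.norm_of_nonneg hT0, div_one] at schwarz
  nlinarith [Real.sq_sqrt hT0, Real.sqrt_nonneg T]

end SiegelHalfSpace

theorem exists_forall_pos_le_add_mul {X : Type*} [TopologicalSpace X] {K : Set X}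
    (hK : IsCompact K) {f g : X → ℝ} (hf : Continuous f) (hg : Continuous g)
    (hg0 : ∀ x, 0 ≤ g x) (hpos : ∀ x ∈ K, g x = 0 → 0 < f x) :
    ∃ A ≥ 0, ∃ c > 0, ∀ x ∈ K, c ≤ f x + A * g x := by
  obtain ⟨k, hk⟩ : ∃ k : ℕ, K ⊆ {x | 0 < f x + k * g x} := by
    refine hK.elim_directed_cover _
      (fun k => isOpen_lt continuous_const (hf.add (continuous_const.mul hg)))
      (fun x hx => mem_iUnion.2 ?_) (Monotone.directed_le fun i j hij x hx => ?_)
    · rcases (hg0 x).eq_or_lt with h0 | h0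
      · exact ⟨0, by simpa using hpos x hx h0.symm⟩
      · obtain ⟨k, hk⟩ := exists_nat_gt (-f x / g x)
        rw [div_lt_iff₀ h0] at hk
        exact ⟨k, neg_lt_iff_pos_add'.1 hk⟩
    · have hij' : (i : ℝ) ≤ j := Nat.cast_le.2 hij
      have hx' : 0 < f x + i * g x := hx
      exact hx'.trans_le (by gcongr; exact hg0 x)
  obtain ⟨c, hc, hle⟩ :=
    hK.exists_forall_le' (hf.add (continuous_const.mul hg)).continuousOn hk
  exact ⟨k, k.cast_nonneg, c, hc, hle⟩

section LeviForm

variable {E F : Type*} [NormedAddCommGroup E] [NormedSpace ℂ E]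

theorem I_smul_I_smul (v : E) : Complex.I • Complex.I • v = -v := by
  rw [smul_smul, Complex.I_mul_I, neg_one_smul]

theorem norm_I_smul (v : E) : ‖Complex.I • v‖ = ‖v‖ := by
  rw [norm_smul, Complex.norm_I, one_mul]

variable [NormedSpace ℝ E] [IsScalarTower ℝ ℂ E] [NormedAddCommGroup F] [NormedSpace ℂ F]
  [NormedSpace ℝ F] [IsScalarTower ℝ ℂ F]

theorem complex_smul_eq (m : ℂ) (v : E) : m • v = m.re • v + m.im • Complex.I • v := by
  rw [← smul_assoc, ← algebraMap_smul ℂ m.re v, ← add_smul]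
  congr 1
  apply Complex.ext <;> simp

/-- The operator `∂` on real differentials: `∂f` is the complex-linear form with
`f = 2 Re ∂f`. -/
def wirtinger : StrongDual ℝ E →L[ℝ] StrongDual ℂ E :=
  (1 / 2 : ℝ) • (StrongDual.extendRCLikeₗᵢ (𝕜 := ℂ) (F := E)).toContinuousLinearEquiv

theorem wirtinger_apply (f : StrongDual ℝ E) (v : E) :
    wirtinger f v = (f v - Complex.I * f (Complex.I • v)) / 2 := by
  change (1 / 2 : ℝ) • StrongDual.extendRCLike (𝕜 := ℂ) f v = _
  rw [StrongDual.extendRCLike_apply, Complex.real_smul]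
  push_cast
  exact one_div_mul_eq_div _ _

theorem two_mul_re_wirtinger (f : StrongDual ℝ E) (v : E) : 2 * (wirtinger f v).re = f v := by
  simp only [wirtinger_apply, Complex.div_ofNat_re, Complex.sub_re, Complex.ofReal_re,
    Complex.re_mul_ofReal, Complex.I_re, zero_mul, sub_zero]
  ring

theorem norm_wirtinger_sq (f : StrongDual ℝ E) (v : E) :
    ‖wirtinger f v‖ ^ 2 = (f v ^ 2 + f (Complex.I • v) ^ 2) / 4 := by
  rw [wirtinger_apply, norm_div, div_pow, ← Complex.normSq_eq_norm_sq, Complex.normSq_apply]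
  simp
  ring

theorem wirtinger_apply_eq_zero_iff (f : StrongDual ℝ E) (v : E) :
    wirtinger f v = 0 ↔ f v = 0 ∧ f (Complex.I • v) = 0 := by
  rw [← norm_eq_zero, ← sq_eq_zero_iff, norm_wirtinger_sq]
  constructor
  · intro h
    constructor <;> nlinarith [sq_nonneg (f v), sq_nonneg (f (Complex.I • v))]
  · rintro ⟨h, h'⟩
    simp [h, h']

theorem wirtinger_ne_zero {f : StrongDual ℝ E} (hf : f ≠ 0) : wirtinger f ≠ 0 := by
  contrapose! hf
  ext v
  exact ((wirtinger_apply_eq_zero_iff f v).1 (by rw [hf, zero_apply])).1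

/-- The complex-linear part `v ↦ (T v - i T (i v)) / 2` of a real-linear map. -/
def complexLinearPart (T : E →L[ℝ] F) : E →L[ℂ] F where
  toFun v := (1 / 2 : ℝ) • (T v - Complex.I • T (Complex.I • v))
  map_add' v w := by
    simp only [smul_add, map_add]
    module
  map_smul' m v := by
    simp only [RingHom.id_apply, complex_smul_eq m, smul_add, smul_sub, smul_comm Complex.I,
      I_smul_I_smul, map_add, map_smul, map_neg]
    module
  cont := by fun_prop

/-- The Levi form of a real Hessian `H`, as a real bilinear form. -/
def leviBilin (H : E →L[ℝ] E →L[ℝ] ℝ) : E →L[ℝ] E →L[ℝ] ℝ :=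
  (1 / 4 : ℝ) • (H + H.bilinearComp (ContinuousLinearMap.lsmul ℝ ℂ Complex.I)
    (ContinuousLinearMap.lsmul ℝ ℂ Complex.I))

/-- The complex-bilinear part of a real Hessian `H`; for `H = D²r` it is the Hessian
`(∂²r / ∂z_j ∂z_k)`. -/
def holomorphicHessian (H : E →L[ℝ] E →L[ℝ] ℝ) : E →L[ℂ] E →L[ℂ] ℂ :=
  complexLinearPart (wirtinger.comp H)

theorem leviBilin_apply (H : E →L[ℝ] E →L[ℝ] ℝ) (v w : E) :
    leviBilin H v w = (H v w + H (Complex.I • v) (Complex.I • w)) / 4 := by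
  change (1 / 4 : ℝ) • (H v w + H (Complex.I • v) (Complex.I • w)) = _
  rw [smul_eq_mul, one_div_mul_eq_div]

theorem re_holomorphicHessian_add_leviBilin (H : E →L[ℝ] E →L[ℝ] ℝ) (w : E) :
    (holomorphicHessian H w w).re + leviBilin H w w = H w w / 2 := by
  have h : holomorphicHessian H w w
      = (1 / 2 : ℝ) • (wirtinger (H w) w - Complex.I • wirtinger (H (Complex.I • w)) w) := rfl
  simp only [h, leviBilin_apply, wirtinger_apply]
  simp
  ring

theorem leviBilin_sub (H H' : E →L[ℝ] E →L[ℝ] ℝ) (v w : E) :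
    leviBilin (H - H') v w = leviBilin H v w - leviBilin H' v w := by
  simp only [leviBilin_apply, sub_apply]
  ring

theorem abs_leviBilin_self_le (H : E →L[ℝ] E →L[ℝ] ℝ) (w : E) :
    |leviBilin H w w| ≤ ‖H‖ * ‖w‖ ^ 2 := by
  have h : |H w w| ≤ ‖H‖ * ‖w‖ * ‖w‖ := H.le_opNorm₂ w w
  have hI : |H (Complex.I • w) (Complex.I • w)| ≤ ‖H‖ * ‖w‖ * ‖w‖ := by
    simpa only [norm_I_smul, Real.norm_eq_abs] using H.le_opNorm₂ (Complex.I • w) (Complex.I • w)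
  rw [leviBilin_apply, abs_div, abs_of_pos (four_pos : (0 : ℝ) < 4), div_le_iff₀ four_pos]
  have := abs_add_le (H w w) (H (Complex.I • w) (Complex.I • w))
  nlinarith [norm_nonneg H, sq_nonneg ‖w‖]

variable {H : E →L[ℝ] E →L[ℝ] ℝ}

theorem leviBilin_symm (hH : ∀ v w, H v w = H w v) (v w : E) :
    leviBilin H v w = leviBilin H w v := by
  rw [leviBilin_apply, leviBilin_apply, hH v w, hH (Complex.I • v)]

theorem leviBilin_self_I_smul (hH : ∀ v w, H v w = H w v) (w : E) :
    leviBilin H w (Complex.I • w) = 0 := by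
  rw [leviBilin_apply, I_smul_I_smul, map_neg, hH (Complex.I • w), add_neg_cancel, zero_div]

theorem leviBilin_smul_self (hH : ∀ v w, H v w = H w v) (m : ℂ) (w : E) :
    leviBilin H (m • w) (m • w) = ‖m‖ ^ 2 * leviBilin H w w := by
  have hI : leviBilin H (Complex.I • w) (Complex.I • w) = leviBilin H w w := by
    simp only [leviBilin_apply, I_smul_I_smul, map_neg, neg_apply, neg_neg, add_comm]
  simp only [complex_smul_eq m, map_add, add_apply, map_smul, smul_apply, smul_eq_mul, hI,
    leviBilin_self_I_smul hH, leviBilin_symm hH (Complex.I • w) w, ← Complex.normSq_eq_norm_sq,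
    Complex.normSq_apply]
  ring

theorem leviBilin_sq_le (hH : ∀ v w, H v w = H w v) (hpos : ∀ w, 0 ≤ leviBilin H w w) (v w : E) :
    leviBilin H v w ^ 2 ≤ leviBilin H v v * leviBilin H w w :=
  LinearMap.BilinForm.apply_sq_le_of_symm (leviBilin H).toLinearMap₁₂ hpos
    ⟨leviBilin_symm hH⟩ v w

theorem norm_extendRCLike_leviBilin_sq_le (hH : ∀ v w, H v w = H w v)
    (hpos : ∀ w, 0 ≤ leviBilin H w w) (X w : E) :
    ‖StrongDual.extendRCLike (𝕜 := ℂ) (leviBilin H X) w‖ ^ 2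
      ≤ leviBilin H X X * leviBilin H w w := by
  set b : ℂ := StrongDual.extendRCLike (𝕜 := ℂ) (leviBilin H X) w
  have hb : leviBilin H X ((starRingEnd ℂ) b • w) = ‖b‖ ^ 2 :=
    (Module.Dual.norm_extendRCLike_apply_sq (𝕜 := ℂ) (leviBilin H X).toLinearMap w).symm
  have cauchy := leviBilin_sq_le hH hpos X ((starRingEnd ℂ) b • w)
  rw [hb, leviBilin_smul_self hH, RCLike.norm_conj] at cauchy
  rcases (sq_nonneg ‖b‖).eq_or_lt with h0 | h0
  · rw [← h0]
    exact mul_nonneg (hpos X) (hpos w)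
  · refine le_of_mul_le_mul_left ?_ h0
    linarith

theorem exists_supporting_functional_leviBilin (hH : ∀ v w, H v w = H w v)
    (hpos : ∀ w, 0 ≤ leviBilin H w w) (X : E) :
    ∃ l : StrongDual ℂ E, l X = √(leviBilin H X X) ∧ ∀ w, ‖l w‖ ^ 2 ≤ leviBilin H w w := by
  refine ⟨((√(leviBilin H X X))⁻¹ : ℂ) • StrongDual.extendRCLike (leviBilin H X), ?_, fun w => ?_⟩
  · rw [smul_apply, StrongDual.extendRCLike_apply, RCLike.I_to_complex,
      leviBilin_self_I_smul hH, smul_eq_mul]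
    simp only [Complex.coe_algebraMap, Complex.ofReal_zero, mul_zero, sub_zero]
    rw [← Complex.ofReal_inv, ← Complex.ofReal_mul, inv_mul_eq_div, Real.div_sqrt]
  · rw [smul_apply, norm_smul, mul_pow, norm_inv, Complex.norm_real,
      Real.norm_of_nonneg (Real.sqrt_nonneg _), inv_pow, Real.sq_sqrt (hpos X), inv_mul_eq_div]
    exact div_le_of_le_mul₀ (hpos X) (hpos w)
      ((norm_extendRCLike_leviBilin_sq_le hH hpos X w).trans_eq (mul_comm _ _))

theorem exists_forall_mul_norm_sq_le_leviBilin_add [FiniteDimensional ℂ E]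
    (hH : ∀ v w, H v w = H w v) {a : StrongDual ℂ E}
    (hpos : ∀ X, X ≠ 0 → a X = 0 → 0 < leviBilin H X X) :
    ∃ A ≥ 0, ∃ c > 0, ∀ X, c * ‖X‖ ^ 2 ≤ leviBilin H X X + A * ‖a X‖ ^ 2 := by
  have : ProperSpace E := FiniteDimensional.proper ℂ E
  obtain ⟨A, hA, c, hc, hsphere⟩ := exists_forall_pos_le_add_mul (isCompact_sphere (0 : E) 1)
    (f := fun X => leviBilin H X X) (g := fun X => ‖a X‖ ^ 2) (by fun_prop) (by fun_prop)
    (fun X => sq_nonneg _)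
    fun X hX h0 => hpos X (ne_zero_of_mem_unit_sphere ⟨X, hX⟩)
      (norm_eq_zero.1 (sq_eq_zero_iff.1 h0))
  refine ⟨A, hA, c, hc, fun X => ?_⟩
  rcases eq_or_ne X 0 with rfl | hX
  · simp
  obtain ⟨Y, hY, hXY⟩ : ∃ Y ∈ sphere (0 : E) 1, X = (‖X‖ : ℂ) • Y :=
    ⟨(‖X‖ : ℂ)⁻¹ • X, by simp [norm_smul, hX], by simp [hX]⟩
  have hn : ‖(‖X‖ : ℂ)‖ = ‖X‖ := by simp
  have scaled := mul_le_mul_of_nonneg_left (hsphere Y hY) (sq_nonneg ‖X‖)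
  calc c * ‖X‖ ^ 2 = ‖X‖ ^ 2 * c := mul_comm _ _
    _ ≤ ‖X‖ ^ 2 * leviBilin H Y Y + A * (‖X‖ * ‖a Y‖) ^ 2 := scaled.trans_eq (by ring)
    _ = leviBilin H ((‖X‖ : ℂ) • Y) ((‖X‖ : ℂ) • Y) + A * ‖a ((‖X‖ : ℂ) • Y)‖ ^ 2 := by
      rw [leviBilin_smul_self hH, map_smul, norm_smul, hn]
    _ = leviBilin H X X + A * ‖a X‖ ^ 2 := by rw [← hXY]

end LeviForm

theorem eventually_norm_sub_le_of_continuousAt {X F : Type*} [TopologicalSpace X]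
    [SeminormedAddCommGroup F] {f : X → F} {p : X} (hf : ContinuousAt f p) {ε : ℝ} (hε : 0 < ε) :
    ∀ᶠ z in 𝓝 p, ‖f z - f p‖ ≤ ε :=
  (tendsto_iff_norm_sub_tendsto_zero.1 hf).eventually_le_const hε

theorem eventually_norm_fderiv_fderiv_sub_le {E : Type*} [NormedAddCommGroup E]
    [NormedSpace ℝ E] {r : E → ℝ} {p : E} (hr : ContDiffAt ℝ 2 r p) {ε : ℝ} (hε : 0 < ε) :
    ∀ᶠ z in 𝓝 p, ‖fderiv ℝ (fderiv ℝ r) z - fderiv ℝ (fderiv ℝ r) p‖ ≤ ε :=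
  eventually_norm_sub_le_of_continuousAt
    ((hr.fderiv_right (m := 1) (by norm_num)).fderiv_right (m := 0) (by norm_num)).continuousAt hε

section LeviPolynomial

variable {E : Type*} [NormedAddCommGroup E] [NormedSpace ℂ E] [NormedSpace ℝ E]
  [IsScalarTower ℝ ℂ E] {Ω : Set E} {r : E → ℝ} {p : E}

/-- The Levi form of `r` at `z` as a quadratic form, for `r` of class `C²` on any complex normed
space; it is computed from the second derivative of `r` as a bilinear map. -/
def leviQuad (r : E → ℝ) (z X : E) : ℝ :=
  leviBilin (fderiv ℝ (fderiv ℝ r) z) X X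

/-- The Levi polynomial of `r` at `z`: the holomorphic polynomial in the displacement `d` whose
real part is the second-order Taylor polynomial of `r` without the Levi form. -/
def leviPolynomial (r : E → ℝ) (z d : E) : ℂ :=
  2 * wirtinger (fderiv ℝ r z) d + holomorphicHessian (fderiv ℝ (fderiv ℝ r) z) d d

/-- The square of the model metric of a defining function `r`: for `r = -δ` it is
`|⟨∂δ, X⟩|² / δ² + L / δ`. -/
def modelNormSq (r : E → ℝ) (z X : E) : ℝ :=
  ‖wirtinger (fderiv ℝ r z) X‖ ^ 2 / r z ^ 2 + leviQuad r z X / -r z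

/-- A local `C²` defining function whose Levi form is uniformly positive at `p` in all
directions, not only in the complex tangential ones. -/
structure IsStrictlyPshDefiningFunctionAt (Ω : Set E) (r : E → ℝ) (p : E) : Prop extends
    IsDefiningFunctionAt Ω r p where
  exists_pos_mul_le_leviQuad : ∃ c > 0, ∀ X, c * ‖X‖ ^ 2 ≤ leviQuad r p X

theorem re_leviPolynomial_add_leviQuad (r : E → ℝ) (z d : E) :
    (leviPolynomial r z d).re + leviQuad r z d
      = fderiv ℝ r z d + fderiv ℝ (fderiv ℝ r) z d d / 2 := by
  rw [← re_holomorphicHessian_add_leviBilin, ← two_mul_re_wirtinger, leviPolynomial, leviQuad,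
    Complex.add_re, Complex.mul_re, Complex.re_ofNat, Complex.im_ofNat]
  ring

theorem differentiable_leviPolynomial (r : E → ℝ) (z : E) :
    Differentiable ℂ (leviPolynomial r z) := by
  unfold leviPolynomial
  fun_prop

theorem norm_leviPolynomial_le (r : E → ℝ) (z : E) {d : E} (hd : ‖d‖ ≤ 1) :
    ‖leviPolynomial r z d‖ ≤ (2 * ‖wirtinger (fderiv ℝ r z)‖
      + ‖holomorphicHessian (fderiv ℝ (fderiv ℝ r) z)‖) * ‖d‖ := by
  set a := wirtinger (fderiv ℝ r z)
  set S := holomorphicHessian (fderiv ℝ (fderiv ℝ r) z)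
  calc ‖2 * a d + S d d‖ ≤ 2 * ‖a d‖ + ‖S d d‖ :=
        (norm_add_le _ _).trans_eq (by rw [norm_mul, Complex.norm_ofNat])
    _ ≤ 2 * (‖a‖ * ‖d‖) + ‖S‖ * ‖d‖ * 1 := by
      gcongr
      · exact a.le_opNorm d
      · exact (S.le_opNorm₂ d d).trans (by gcongr)
    _ = (2 * ‖a‖ + ‖S‖) * ‖d‖ := by ring

theorem leviQuad_smul (hr : ContDiffAt ℝ 2 r p) (m : ℂ) (X : E) :
    leviQuad r p (m • X) = ‖m‖ ^ 2 * leviQuad r p X :=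
  leviBilin_smul_self (hr.isSymmSndFDerivAt (by simp)) m X

theorem modelNormSq_smul (hr : ContDiffAt ℝ 2 r p) (m : ℂ) (X : E) :
    modelNormSq r p (m • X) = ‖m‖ ^ 2 * modelNormSq r p X := by
  rw [modelNormSq, modelNormSq, leviQuad_smul hr, map_smul, norm_smul]
  ring

theorem exists_forall_mem_ball_abs_sub_leviPolynomial_le (hr : ContDiffAt ℝ 2 r p) {ε : ℝ}
    (hε : 0 < ε) :
    ∃ R > 0, ∀ z ∈ ball p R, ∀ w ∈ ball p R,
      |r w - r z - (leviPolynomial r z (w - z)).re - leviQuad r z (w - z)| ≤ ε * ‖w - z‖ ^ 2 := by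
  obtain ⟨R₁, hR₁, htaylor⟩ := exists_forall_mem_ball_abs_taylor_two_le hr (half_pos hε)
  obtain ⟨R₂, hR₂, hcont⟩ :=
    Metric.eventually_nhds_iff_ball.1 (eventually_norm_fderiv_fderiv_sub_le hr hε)
  refine ⟨min R₁ R₂, lt_min hR₁ hR₂, fun z hz w hw => ?_⟩
  have hD := hcont z (ball_subset_ball (min_le_right _ _) hz)
  have taylor := htaylor z (ball_subset_ball (min_le_left _ _) hz) w
    (ball_subset_ball (min_le_left _ _) hw)
  set d := w - z
  set D := fderiv ℝ (fderiv ℝ r) z - fderiv ℝ (fderiv ℝ r) p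
  have hDd : |D d d| ≤ ε * ‖d‖ ^ 2 := by
    have := D.le_opNorm₂ d d
    rw [Real.norm_eq_abs] at this
    nlinarith [sq_nonneg ‖d‖]
  have split : r w - r z - (leviPolynomial r z d).re - leviQuad r z d
      = (r w - r z - fderiv ℝ r z d - fderiv ℝ (fderiv ℝ r) p d d / 2) - D d d / 2 := by
    have : D d d = fderiv ℝ (fderiv ℝ r) z d d - fderiv ℝ (fderiv ℝ r) p d d := rfl
    linarith [re_leviPolynomial_add_leviQuad r z d]
  rw [split]
  have triangle := abs_sub (r w - r z - fderiv ℝ r z d - fderiv ℝ (fderiv ℝ r) p d d / 2)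
    (D d d / 2)
  rw [abs_div, abs_two] at triangle
  linarith

namespace IsStrictlyPshDefiningFunctionAt

theorem exists_pos_eventually_le_leviQuad (h : IsStrictlyPshDefiningFunctionAt Ω r p) :
    ∃ c > 0, ∀ᶠ z in 𝓝 p, ∀ X, c * ‖X‖ ^ 2 ≤ leviQuad r z X := by
  obtain ⟨c, hc, hle⟩ := h.exists_pos_mul_le_leviQuad
  refine ⟨c / 2, half_pos hc, ?_⟩
  filter_upwards [eventually_norm_fderiv_fderiv_sub_le h.contDiffAt (half_pos hc)] with z hz X
  have hdiff := abs_le.1 ((abs_leviBilin_self_le _ X).trans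
    (mul_le_mul_of_nonneg_right hz (sq_nonneg ‖X‖)))
  rw [leviBilin_sub] at hdiff
  change c / 2 * ‖X‖ ^ 2 ≤ leviBilin _ X X
  linarith [hle X, show leviQuad r p X = leviBilin (fderiv ℝ (fderiv ℝ r) p) X X from rfl]

theorem eventually_modelNormSq_pos (h : IsStrictlyPshDefiningFunctionAt Ω r p) :
    ∀ᶠ z in 𝓝 p, z ∈ Ω → ∀ X, X ≠ 0 → 0 < modelNormSq r z X := by
  obtain ⟨c, hc, hL⟩ := h.exists_pos_eventually_le_leviQuad
  filter_upwards [hL, h.mem_iff] with z hLz hmem hz X hX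
  have hLpos : 0 < leviQuad r z X := (mul_pos hc (by positivity)).trans_le (hLz X)
  exact add_pos_of_nonneg_of_pos (by positivity) (div_pos hLpos (neg_pos.2 (hmem.1 hz)))

/-- Since `r` is strictly plurisubharmonic, its Levi polynomial at `p` peaks at `p`. -/
theorem exists_isLocalPeak (h : IsStrictlyPshDefiningFunctionAt Ω r p) :
    ∃ R k K, IsLocalPeak Ω p (fun w => leviPolynomial r p (w - p)) R k K := by
  obtain ⟨c, hc, hle⟩ := h.exists_pos_mul_le_leviQuad
  obtain ⟨R₁, hR₁, htaylor⟩ :=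
    exists_forall_mem_ball_abs_sub_leviPolynomial_le h.contDiffAt (half_pos hc)
  obtain ⟨R₂, hR₂, hmem⟩ := Metric.eventually_nhds_iff_ball.1 h.mem_iff
  set K := 2 * ‖wirtinger (fderiv ℝ r p)‖ + ‖holomorphicHessian (fderiv ℝ (fderiv ℝ r) p)‖
  refine ⟨min (min R₁ R₂) 1, c / 2, K + 1, ⟨?_, by positivity, half_pos hc, by positivity, ?_, ?_⟩⟩
  · exact (differentiable_leviPolynomial r p).comp (differentiable_id.sub_const p)
  · intro w hw hwR
    obtain ⟨⟨hw₁, hw₂⟩, -⟩ : (dist w p < R₁ ∧ dist w p < R₂) ∧ dist w p < 1 := by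
      simpa only [mem_ball, lt_min_iff] using hwR
    have taylor := (abs_le.1 (htaylor p (mem_ball_self hR₁) w hw₁)).1
    rw [h.apply_self] at taylor
    linarith [hle (w - p), (hmem w hw₂).1 hw]
  · intro w hw
    have hw1 : ‖w - p‖ ≤ 1 := (mem_ball_iff_norm.1 hw).le.trans (min_le_right _ _)
    linarith [norm_leviPolynomial_le r p hw1, norm_nonneg (w - p)]

end IsStrictlyPshDefiningFunctionAt

end LeviPolynomial

section LowerEstimate

theorem norm_ofReal_mul_le {s : ℝ} (hs0 : 0 ≤ s) {ζ : ℂ} (hζ : ζ ∈ ball (0 : ℂ) 1) :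
    ‖(s : ℂ) * ζ‖ ≤ s := by
  rw [norm_mul, Complex.norm_real, Real.norm_of_nonneg hs0]
  exact mul_le_of_le_one_right hs0 (mem_ball_zero_iff.1 hζ).le

variable {E : Type*} [NormedAddCommGroup E] [NormedSpace ℂ E]

/-- The Schwarz lemma for the Siegel half-space, pulled back along `w ↦ (P w, l w)`. -/
theorem normSq_fderiv_deriv_add_le_one {P : E → ℂ} {b l : StrongDual ℂ E} {w : ℂ → E} {δ : ℝ}
    (hδ : 0 < δ) (hP : Differentiable ℂ P) (hP0 : P 0 = 0) (hb : HasFDerivAt P b 0)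
    (hw : DifferentiableOn ℂ w (ball 0 1)) (hw0 : w 0 = 0)
    (h : ∀ ζ ∈ ball (0 : ℂ) 1, ‖l (w ζ)‖ ^ 2 ≤ δ - (P (w ζ)).re) :
    ‖b (deriv w 0)‖ ^ 2 / (2 * δ) ^ 2 + ‖l (deriv w 0)‖ ^ 2 / δ ≤ 1 := by
  have hdw : HasDerivAt w (deriv w 0) 0 :=
    (hw.differentiableAt (isOpen_ball.mem_nhds (mem_ball_self one_pos))).hasDerivAt
  have hdu : HasDerivAt (fun ζ => P (w ζ) / ((2 * δ : ℝ) : ℂ))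
      (b (deriv w 0) / ((2 * δ : ℝ) : ℂ)) 0 :=
    (HasFDerivAt.comp_hasDerivAt 0 (hw0.symm ▸ hb) hdw).div_const _
  have hdv : HasDerivAt (fun ζ => l (w ζ) / ((√δ : ℝ) : ℂ)) (l (deriv w 0) / ((√δ : ℝ) : ℂ)) 0 :=
    (l.hasFDerivAt.comp_hasDerivAt 0 hdw).div_const _
  have norm_div_sqrt_sq (x : ℂ) : ‖x / ((√δ : ℝ) : ℂ)‖ ^ 2 = ‖x‖ ^ 2 / δ := by
    rw [norm_div, div_pow, Complex.norm_real, Real.norm_eq_abs, sq_abs, Real.sq_sqrt hδ.le]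
  have schwarz := norm_deriv_sq_add_norm_deriv_sq_le_one
    ((hP.comp_differentiableOn hw).div_const ((2 * δ : ℝ) : ℂ))
    ((l.differentiable.comp_differentiableOn hw).div_const ((√δ : ℝ) : ℂ))
    (by simp only [Function.comp_apply, hw0, hP0, zero_div])
    (by simp only [Function.comp_apply, hw0, map_zero, zero_div]) fun ζ hζ => by
      simp only [Function.comp_apply, norm_div_sqrt_sq, Complex.div_ofReal_re]
      rw [div_le_iff₀ hδ]
      refine (h ζ hζ).trans_eq ?_
      field_simp
  simp only [Function.comp_def] at schwarz
  rwa [hdu.deriv, hdv.deriv, norm_div_sqrt_sq, norm_div, div_pow, Complex.norm_real,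
    Real.norm_eq_abs, sq_abs] at schwarz

theorem deriv_comp_mul_left_sub_zero (φ : ℂ → E) (s : ℂ) (z : E) :
    deriv (fun ζ => φ (s * ζ) - z) 0 = s • deriv φ 0 := by
  rw [deriv_sub_const, deriv_comp_mul_left, mul_zero]

variable [NormedSpace ℝ E] [IsScalarTower ℝ ℂ E] {Ω : Set E} {r : E → ℝ} {p z : E} {s c : ℝ}

theorem leviPolynomial_zero (r : E → ℝ) (z : E) : leviPolynomial r z 0 = 0 := by
  simp only [leviPolynomial, map_zero, mul_zero, add_zero]

theorem hasFDerivAt_leviPolynomial_zero (r : E → ℝ) (z : E) :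
    HasFDerivAt (leviPolynomial r z) ((2 : ℂ) • wirtinger (fderiv ℝ r z)) 0 := by
  have hquad := (holomorphicHessian (fderiv ℝ (fderiv ℝ r) z)).hasFDerivAt.clm_apply
    (hasFDerivAt_id (𝕜 := ℂ) (0 : E))
  refine (((wirtinger (fderiv ℝ r z)).hasFDerivAt.const_mul 2).add hquad).congr_fderiv ?_
  ext d
  simp

theorem sq_mul_modelNormSq_deriv_le_one (hr : ContDiffAt ℝ 2 r z) (hz : r z < 0)
    (hs1 : s ^ 2 ≤ 1) (hc : 0 ≤ c) (hL : ∀ X, c * ‖X‖ ^ 2 ≤ leviQuad r z X) {w : ℂ → E}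
    (hw : DifferentiableOn ℂ w (ball 0 1)) (hw0 : w 0 = 0)
    (h : ∀ ζ ∈ ball (0 : ℂ) 1, (leviPolynomial r z (w ζ)).re + leviQuad r z (w ζ)
      - (1 - s ^ 2) * c * ‖w ζ‖ ^ 2 ≤ -r z) :
    s ^ 2 * modelNormSq r z (deriv w 0) ≤ 1 := by
  set Y := deriv w 0
  have hL0 : ∀ X, 0 ≤ leviQuad r z X := fun X => le_trans (by positivity) (hL X)
  obtain ⟨l, hlY, hl⟩ : ∃ l : StrongDual ℂ E, l Y = √(leviQuad r z Y) ∧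
      ∀ X, ‖l X‖ ^ 2 ≤ leviQuad r z X :=
    exists_supporting_functional_leviBilin (hr.isSymmSndFDerivAt (by simp)) hL0 Y
  have norm_smul_sq (x : ℂ) : ‖(s : ℂ) • x‖ ^ 2 = s ^ 2 * ‖x‖ ^ 2 := by
    rw [norm_smul, mul_pow, Complex.norm_real, Real.norm_eq_abs, sq_abs]
  have schwarz := normSq_fderiv_deriv_add_le_one (l := (s : ℂ) • l) (neg_pos.2 hz)
    (differentiable_leviPolynomial r z) (leviPolynomial_zero r z)
    (hasFDerivAt_leviPolynomial_zero r z) hw hw0 fun ζ hζ => by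
      rw [smul_apply, norm_smul_sq]
      nlinarith [h ζ hζ, hl (w ζ), hL (w ζ)]
  have hlY' : ‖l Y‖ ^ 2 = leviQuad r z Y := by
    rw [hlY, Complex.norm_real, Real.norm_eq_abs, sq_abs, Real.sq_sqrt (hL0 Y)]
  rw [smul_apply, smul_apply, norm_smul_sq, norm_smul, mul_pow, hlY', Complex.norm_ofNat] at schwarz
  calc s ^ 2 * modelNormSq r z Y
      = s ^ 2 * (‖wirtinger (fderiv ℝ r z) Y‖ ^ 2 / r z ^ 2)
        + s ^ 2 * leviQuad r z Y / -r z := by rw [modelNormSq]; ring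
    _ ≤ 1 * (‖wirtinger (fderiv ℝ r z) Y‖ ^ 2 / r z ^ 2) + s ^ 2 * leviQuad r z Y / -r z := by
      gcongr
    _ = 2 ^ 2 * ‖wirtinger (fderiv ℝ r z) Y‖ ^ 2 / (2 * -r z) ^ 2
        + s ^ 2 * leviQuad r z Y / -r z := by
      rw [mul_pow, neg_sq, mul_div_mul_left _ _ (by norm_num), one_mul]
    _ ≤ 1 := schwarz

theorem IsStrictlyPshDefiningFunctionAt.eventually_pow_four_mul_modelNormSq_deriv_le_one
    [CompleteSpace E] (h : IsStrictlyPshDefiningFunctionAt Ω r p) (hs0 : 0 < s) (hs : s < 1) :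
    ∀ᶠ z in 𝓝 p, ∀ φ : ℂ → E, DifferentiableOn ℂ φ (ball 0 1) → MapsTo φ (ball 0 1) Ω →
      φ 0 = z → s ^ 4 * modelNormSq r z (deriv φ 0) ≤ 1 := by
  obtain ⟨c, hc, hL⟩ := h.exists_pos_eventually_le_leviQuad
  have hs2 : s ^ 2 < 1 := pow_lt_one₀ hs0.le hs two_ne_zero
  obtain ⟨R₁, hR₁, htaylor⟩ := exists_forall_mem_ball_abs_sub_leviPolynomial_le h.contDiffAt
    (mul_pos (sub_pos.2 hs2) hc)
  obtain ⟨R₂, hR₂, hmem⟩ := Metric.eventually_nhds_iff_ball.1 h.mem_iff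
  obtain ⟨_, _, _, hpeak⟩ := h.exists_isLocalPeak
  obtain ⟨V, hV, hloc⟩ := hpeak.exists_localization hs (lt_min hR₁ hR₂)
  filter_upwards [hL, h.eventually_contDiffAt, ball_mem_nhds p hV] with z hLz hr hzV φ hφ hmap hφ0
  have hscale : ∀ ζ ∈ ball (0 : ℂ) 1, (s : ℂ) * ζ ∈ closedBall (0 : ℂ) s :=
    fun ζ hζ => mem_closedBall_zero_iff.2 (norm_ofReal_mul_le hs0.le hζ)
  have hφs : ∀ ζ ∈ ball (0 : ℂ) 1, φ (s * ζ) ∈ ball p R₁ ∧ r (φ (s * ζ)) < 0 := fun ζ hζ => by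
    have hball := hloc φ hφ hmap (hφ0.symm ▸ hzV) _ (hscale ζ hζ)
    exact ⟨ball_subset_ball (min_le_left _ _) hball,
      (hmem _ (ball_subset_ball (min_le_right _ _) hball)).1
        (hmap (closedBall_subset_ball hs (hscale ζ hζ)))⟩
  obtain ⟨hzR, hz⟩ : z ∈ ball p R₁ ∧ r z < 0 := by
    simpa only [mul_zero, hφ0] using hφs 0 (mem_ball_self one_pos)
  have key := sq_mul_modelNormSq_deriv_le_one hr hz hs2.le hc.le hLz
    (w := fun ζ => φ (s * ζ) - z)
    ((hφ.comp (by fun_prop) fun ζ hζ => closedBall_subset_ball hs (hscale ζ hζ)).sub_const z)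
    (by simp only [mul_zero, hφ0, sub_self]) fun ζ hζ => by
      have taylor := (abs_le.1 (htaylor z hzR _ (hφs ζ hζ).1)).1
      linarith [(hφs ζ hζ).2]
  rw [deriv_comp_mul_left_sub_zero, modelNormSq_smul hr, Complex.norm_real,
    Real.norm_of_nonneg hs0.le] at key
  linarith

end LowerEstimate

section Shear

theorem norm_apply_self_sub_apply_self_le {𝕜 E F : Type*} [NontriviallyNormedField 𝕜]
    [SeminormedAddCommGroup E] [NormedSpace 𝕜 E] [SeminormedAddCommGroup F] [NormedSpace 𝕜 F]
    (B : E →L[𝕜] E →L[𝕜] F) (x y : E) :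
    ‖B x x - B y y‖ ≤ ‖B‖ * (‖x‖ + ‖y‖) * ‖x - y‖ := by
  have split : B x x - B y y = B x (x - y) + B (x - y) y := by
    simp only [map_sub, sub_apply, sub_add_sub_cancel]
  calc ‖B x x - B y y‖ ≤ ‖B‖ * ‖x‖ * ‖x - y‖ + ‖B‖ * ‖x - y‖ * ‖y‖ :=
        split ▸ norm_add_le_of_le (B.le_opNorm₂ _ _) (B.le_opNorm₂ _ _)
    _ = ‖B‖ * (‖x‖ + ‖y‖) * ‖x - y‖ := by ring

variable {E : Type*} [NormedAddCommGroup E] [NormedSpace ℂ E]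

/-- A quadratic shear in the direction `N`. When `N` is normal to the boundary, it removes the
holomorphic Hessian `S` from the second-order expansion of a defining function. -/
def quadShear (S : E →L[ℂ] E →L[ℂ] ℂ) (N w : E) : E :=
  w - (S w w / 2) • N

variable (S : E →L[ℂ] E →L[ℂ] ℂ) (N : E)

theorem quadShear_zero : quadShear S N 0 = 0 := by
  simp only [quadShear, map_zero, zero_div, zero_smul, sub_zero]

theorem differentiable_quadShear : Differentiable ℂ (quadShear S N) := by
  unfold quadShear
  fun_prop

theorem hasFDerivAt_quadShear_zero :
    HasFDerivAt (quadShear S N) (ContinuousLinearMap.id ℂ E) 0 := by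
  have hquad := ((S.hasFDerivAt.clm_apply (hasFDerivAt_id (𝕜 := ℂ) (0 : E))).mul_const
    (2 : ℂ)⁻¹).smul_const N
  refine ((hasFDerivAt_id (0 : E)).sub hquad).congr_fderiv ?_
  ext w
  simp

theorem norm_quadShear_sub_self_le (w : E) :
    ‖quadShear S N w - w‖ ≤ ‖S‖ * ‖N‖ * ‖w‖ ^ 2 := by
  have hS : ‖S w w‖ ≤ ‖S‖ * ‖w‖ * ‖w‖ := S.le_opNorm₂ w w
  rw [quadShear, sub_sub_cancel_left, norm_neg, norm_smul, norm_div, Complex.norm_ofNat]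
  calc ‖S w w‖ / 2 * ‖N‖ ≤ ‖S‖ * ‖w‖ * ‖w‖ * ‖N‖ := by
        gcongr
        linarith [norm_nonneg (S w w)]
    _ = ‖S‖ * ‖N‖ * ‖w‖ ^ 2 := by ring

theorem norm_quadShear_le {w : E} (hw : ‖w‖ ≤ 1) :
    ‖quadShear S N w‖ ≤ (1 + ‖S‖ * ‖N‖) * ‖w‖ := by
  have hsub := norm_quadShear_sub_self_le S N w
  have hsq : ‖S‖ * ‖N‖ * ‖w‖ ^ 2 ≤ ‖S‖ * ‖N‖ * ‖w‖ := by
    gcongr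
    exact pow_le_of_le_one (norm_nonneg w) hw two_ne_zero
  linarith [norm_le_insert' (quadShear S N w) w]

theorem tendsto_add_quadShear (p : E) :
    Tendsto (fun q : E × E => q.1 + quadShear S N q.2) (𝓝 (p, 0)) (𝓝 p) := by
  have hcont : Continuous fun q : E × E => q.1 + quadShear S N q.2 :=
    continuous_fst.add ((differentiable_quadShear S N).continuous.comp continuous_snd)
  simpa only [quadShear_zero, add_zero] using hcont.tendsto (p, 0)

theorem abs_apply_quadShear_self_sub_le [NormedSpace ℝ E] (H : E →L[ℝ] E →L[ℝ] ℝ) {w : E}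
    (hw : ‖w‖ ≤ 1) :
    |H (quadShear S N w) (quadShear S N w) - H w w|
      ≤ ‖H‖ * (2 + ‖S‖ * ‖N‖) * (‖S‖ * ‖N‖) * ‖w‖ * ‖w‖ ^ 2 :=
  calc _ ≤ ‖H‖ * (‖quadShear S N w‖ + ‖w‖) * ‖quadShear S N w - w‖ :=
        norm_apply_self_sub_apply_self_le H _ w
    _ ≤ ‖H‖ * ((1 + ‖S‖ * ‖N‖) * ‖w‖ + ‖w‖) * (‖S‖ * ‖N‖ * ‖w‖ ^ 2) := by
      gcongr
      · exact norm_quadShear_le S N hw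
      · exact norm_quadShear_sub_self_le S N w
    _ = ‖H‖ * (2 + ‖S‖ * ‖N‖) * (‖S‖ * ‖N‖) * ‖w‖ * ‖w‖ ^ 2 := by ring

variable [NormedSpace ℝ E] [IsScalarTower ℝ ℂ E] {r : E → ℝ} {p : E} {N : E}

/-- The terms left over by the shear: the Taylor remainder, the failure of `N` to be normalized at
`z`, the bilinear error of the shear, and the variation of the Hessian. -/
theorem sub_quadShear_eq (r : E → ℝ) (p z N w : E) :
    let H := fderiv ℝ (fderiv ℝ r)
    let d := quadShear (holomorphicHessian (H p)) N w
    r (z + d) - r z - 2 * (wirtinger (fderiv ℝ r z) w).re - leviQuad r z w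
      = (r (z + d) - r z - fderiv ℝ r z d - H p d d / 2)
        + (holomorphicHessian (H p) w w * (1 - wirtinger (fderiv ℝ r z) N)).re
        + (H p d d - H p w w) / 2 - leviBilin (H z - H p) w w := by
  intro H d
  have hd : fderiv ℝ r z d = 2 * (wirtinger (fderiv ℝ r z) w).re
      - (holomorphicHessian (H p) w w * wirtinger (fderiv ℝ r z) N).re := by
    rw [← two_mul_re_wirtinger, show d = w - (holomorphicHessian (H p) w w / 2) • N from rfl,
      map_sub, map_smul, smul_eq_mul, Complex.sub_re, div_mul_eq_mul_div, Complex.div_ofNat_re]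
    ring
  rw [leviBilin_sub, hd, mul_sub, mul_one, Complex.sub_re, leviQuad]
  linarith [re_holomorphicHessian_add_leviBilin (H p) w]

theorem eventually_abs_re_mul_one_sub_wirtinger_le (S : E →L[ℂ] E →L[ℂ] ℂ)
    (hr : ContDiffAt ℝ 2 r p) (hN : wirtinger (fderiv ℝ r p) N = 1) {ε : ℝ} (hε : 0 < ε) :
    ∀ᶠ z in 𝓝 p, ∀ w, |(S w w * (1 - wirtinger (fderiv ℝ r z) N)).re| ≤ ε * ‖w‖ ^ 2 := by
  have hdr : ContinuousAt (fun z => wirtinger (fderiv ℝ r z)) p :=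
    wirtinger.continuous.continuousAt.comp (hr.continuousAt_fderiv (by norm_num))
  have hcont : ContinuousAt (fun z => ‖S‖ * ‖1 - wirtinger (fderiv ℝ r z) N‖) p :=
    continuousAt_const.mul (continuousAt_const.sub (hdr.clm_apply continuousAt_const)).norm
  filter_upwards [hcont.eventually_le_const (u := ε) (by simpa [hN])] with z hz w
  calc _ ≤ ‖S w w‖ * ‖1 - wirtinger (fderiv ℝ r z) N‖ :=
        (Complex.abs_re_le_norm _).trans_eq (norm_mul _ _)
    _ ≤ ‖S‖ * ‖w‖ * ‖w‖ * ‖1 - wirtinger (fderiv ℝ r z) N‖ := by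
      gcongr
      exact S.le_opNorm₂ w w
    _ = ‖S‖ * ‖1 - wirtinger (fderiv ℝ r z) N‖ * ‖w‖ ^ 2 := by ring
    _ ≤ ε * ‖w‖ ^ 2 := by gcongr

theorem eventually_abs_sub_quadShear_le (hr : ContDiffAt ℝ 2 r p)
    (hN : wirtinger (fderiv ℝ r p) N = 1) {ε : ℝ} (hε : 0 < ε) :
    ∀ᶠ q : E × E in 𝓝 (p, 0),
      |r (q.1 + quadShear (holomorphicHessian (fderiv ℝ (fderiv ℝ r) p)) N q.2) - r q.1
        - 2 * (wirtinger (fderiv ℝ r q.1) q.2).re - leviQuad r q.1 q.2| ≤ ε * ‖q.2‖ ^ 2 := by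
  set H := fderiv ℝ (fderiv ℝ r) p
  set S := holomorphicHessian H
  set k := ‖S‖ * ‖N‖
  have hk : 0 ≤ k := by positivity
  obtain ⟨R, hR, htaylor⟩ := exists_forall_mem_ball_abs_taylor_two_le hr
    (show 0 < ε / 4 / (1 + k) ^ 2 by positivity)
  have hε4 : 0 < ε / 4 := by positivity
  have hsmall : Continuous fun w : E => ‖H‖ * (2 + k) * k * ‖w‖ := by fun_prop
  have hfst : Tendsto Prod.fst (𝓝 (p, (0 : E))) (𝓝 p) := continuous_fst.tendsto _
  have hsnd : Tendsto Prod.snd (𝓝 (p, (0 : E))) (𝓝 0) := continuous_snd.tendsto _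
  filter_upwards [hfst.eventually (ball_mem_nhds p hR),
    (tendsto_add_quadShear S N p).eventually (ball_mem_nhds p hR),
    hfst.eventually (eventually_abs_re_mul_one_sub_wirtinger_le S hr hN hε4),
    hsnd.eventually ((hsmall.tendsto 0).eventually_le_const (u := ε / 4) (by simpa)),
    hsnd.eventually (closedBall_mem_nhds 0 one_pos),
    hfst.eventually (eventually_norm_fderiv_fderiv_sub_le hr hε4)]
    with ⟨z, w⟩ hz hzd normal hw hw1 hzH
  replace hw1 : ‖w‖ ≤ 1 := mem_closedBall_zero_iff.1 hw1
  have hd := norm_quadShear_le S N hw1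
  replace normal := normal w
  change |r (z + quadShear S N w) - r z - 2 * (wirtinger (fderiv ℝ r z) w).re - leviQuad r z w|
    ≤ ε * ‖w‖ ^ 2
  rw [sub_quadShear_eq r p z N w]
  set d := quadShear S N w
  have taylor : |r (z + d) - r z - fderiv ℝ r z d - H d d / 2| ≤ ε / 4 * ‖w‖ ^ 2 := by
    have := htaylor z hz (z + d) hzd
    rw [add_sub_cancel_left] at this
    calc _ ≤ ε / 4 / (1 + k) ^ 2 * ‖d‖ ^ 2 := this
      _ ≤ ε / 4 / (1 + k) ^ 2 * ((1 + k) * ‖w‖) ^ 2 := by gcongr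
      _ = ε / 4 * ‖w‖ ^ 2 := by field_simp
  have bilinear : |H d d - H w w| ≤ ε / 4 * ‖w‖ ^ 2 :=
    (abs_apply_quadShear_self_sub_le S N H hw1).trans (by gcongr)
  have hessian : |leviBilin (fderiv ℝ (fderiv ℝ r) z - H) w w| ≤ ε / 4 * ‖w‖ ^ 2 :=
    (abs_leviBilin_self_le _ w).trans (by gcongr)
  rw [abs_le] at *
  constructor <;> linarith

end Shear

section Moebius

theorem one_sub_two_mul_re_sub_eq {x σ : ℂ} (h : 1 + x * σ ≠ 0) :
    1 - 2 * (x * (σ / (1 + x * σ))).re - ‖σ / (1 + x * σ)‖ ^ 2 * (1 - ‖x‖ ^ 2)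
      = (1 - ‖σ‖ ^ 2) / ‖1 + x * σ‖ ^ 2 := by
  have hre : (x * (σ / (1 + x * σ))).re = ((x * σ).re + ‖x * σ‖ ^ 2) / ‖1 + x * σ‖ ^ 2 := by
    rw [← mul_div_assoc, Complex.div_re, ← Complex.normSq_eq_norm_sq, ← Complex.normSq_eq_norm_sq,
      Complex.normSq_apply (x * σ), Complex.add_re, Complex.add_im, Complex.one_re, Complex.one_im]
    ring
  have hnorm : ‖1 + x * σ‖ ^ 2 = 1 + 2 * (x * σ).re + ‖x * σ‖ ^ 2 := by
    simpa only [sub_neg_eq_add, Complex.neg_re, norm_neg, mul_neg] using norm_one_sub_sq (-(x * σ))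
  rw [norm_div, div_pow, hre, norm_mul, mul_pow]
  field_simp
  rw [hnorm, norm_mul, mul_pow]
  ring

variable {x σ : ℂ} {s : ℝ}

theorem one_sub_le_norm_one_add_mul (hx : ‖x‖ ≤ 1) (hσ : ‖σ‖ ≤ s) : 1 - s ≤ ‖1 + x * σ‖ := by
  have hxσ : ‖x * σ‖ ≤ s :=
    (norm_mul_le _ _).trans ((mul_le_of_le_one_left (norm_nonneg σ) hx).trans hσ)
  have := norm_sub_norm_le (1 : ℂ) (-(x * σ))
  rw [norm_one, norm_neg, sub_neg_eq_add] at this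
  linarith

theorem one_sub_sq_div_four_le (hx : ‖x‖ ≤ 1) (hσ : ‖σ‖ ≤ s) (hs : s < 1) :
    (1 - s ^ 2) / 4
      ≤ 1 - 2 * (x * (σ / (1 + x * σ))).re - ‖σ / (1 + x * σ)‖ ^ 2 * (1 - ‖x‖ ^ 2) := by
  have hden : 0 < ‖1 + x * σ‖ := (sub_pos.2 hs).trans_le (one_sub_le_norm_one_add_mul hx hσ)
  have hden2 : ‖1 + x * σ‖ ≤ 2 := by
    have : ‖x * σ‖ ≤ 1 := norm_mul x σ ▸ mul_le_one₀ hx (norm_nonneg σ) (hσ.trans hs.le)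
    linarith [norm_add_le (1 : ℂ) (x * σ), norm_one (α := ℂ)]
  have hσ2 : ‖σ‖ ^ 2 ≤ s ^ 2 := by gcongr
  have hs2 : s ^ 2 ≤ 1 := pow_le_one₀ ((norm_nonneg σ).trans hσ) hs.le
  rw [one_sub_two_mul_re_sub_eq (norm_pos_iff.1 hden)]
  exact div_le_div₀ (by linarith) (by linarith) (by positivity) (by nlinarith)

end Moebius

section UpperEstimate

variable {E : Type*} [NormedAddCommGroup E] [NormedSpace ℂ E]

/-- The parametrization `ζ ↦ s ζ / (1 + x s ζ) • X` of the extremal disc through `0` in the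
direction `X` for the Siegel half-space. -/
def siegelDisc (s : ℝ) (x : ℂ) (X : E) (ζ : ℂ) : E :=
  (s * ζ / (1 + x * (s * ζ))) • X

variable {s : ℝ} {x : ℂ} {X : E}

theorem siegelDisc_zero (s : ℝ) (x : ℂ) (X : E) : siegelDisc s x X 0 = 0 := by
  simp only [siegelDisc, mul_zero, zero_div, zero_smul]

theorem differentiableOn_siegelDisc (hs0 : 0 ≤ s) (hs : s < 1) (hx : ‖x‖ ≤ 1) :
    DifferentiableOn ℂ (siegelDisc s x X) (ball 0 1) := by
  refine (DifferentiableOn.div (by fun_prop) (by fun_prop) fun ζ hζ => ?_).smul_const X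
  exact norm_pos_iff.1
    ((sub_pos.2 hs).trans_le (one_sub_le_norm_one_add_mul hx (norm_ofReal_mul_le hs0 hζ)))

theorem hasDerivAt_siegelDisc_zero (s : ℝ) (x : ℂ) (X : E) :
    HasDerivAt (siegelDisc s x X) ((s : ℂ) • X) 0 := by
  have hnum : HasDerivAt (fun ζ : ℂ => (s : ℂ) * ζ) s 0 := by
    simpa using (hasDerivAt_id (0 : ℂ)).const_mul (s : ℂ)
  have hden := (hnum.const_mul x).const_add 1
  refine ((hnum.div hden (by simp)).smul_const X).congr_deriv ?_
  simp

theorem norm_siegelDisc_le (hs0 : 0 ≤ s) (hs : s < 1) (hx : ‖x‖ ≤ 1) {ζ : ℂ}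
    (hζ : ζ ∈ ball (0 : ℂ) 1) : ‖siegelDisc s x X ζ‖ ≤ (1 - s)⁻¹ * ‖X‖ := by
  have hσ := norm_ofReal_mul_le hs0 hζ
  rw [siegelDisc, norm_smul, norm_div, ← one_div]
  exact mul_le_mul_of_nonneg_right (div_le_div₀ zero_le_one (hσ.trans hs.le) (sub_pos.2 hs)
    (one_sub_le_norm_one_add_mul hx hσ)) (norm_nonneg X)

variable [NormedSpace ℝ E] [IsScalarTower ℝ ℂ E] {Ω : Set E} {r : E → ℝ} {p z : E}

theorem mul_norm_sq_le_of_modelNormSq_eq_one {c : ℝ} (hz : r z < 0)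
    (hL : c * ‖X‖ ^ 2 ≤ leviQuad r z X) (hX : modelNormSq r z X = 1) : c * ‖X‖ ^ 2 ≤ -r z := by
  have hdiv : leviQuad r z X / -r z ≤ 1 := by
    rw [← hX, modelNormSq]
    exact le_add_of_nonneg_left (by positivity)
  exact hL.trans ((div_le_one (neg_pos.2 hz)).1 hdiv)

theorem norm_wirtinger_div_le_one (hz : r z < 0) (hL : 0 ≤ leviQuad r z X)
    (hX : modelNormSq r z X = 1) : ‖wirtinger (fderiv ℝ r z) X / ((-r z : ℝ) : ℂ)‖ ≤ 1 := by
  have hdiv : 0 ≤ leviQuad r z X / -r z := div_nonneg hL (neg_pos.2 hz).le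
  rw [← sq_le_one_iff₀ (norm_nonneg _), norm_div, div_pow, Complex.norm_real, norm_neg,
    Real.norm_eq_abs, sq_abs, ← hX, modelNormSq]
  exact le_add_of_nonneg_right hdiv

theorem mul_norm_siegelDisc_sq_le {c : ℝ} (hc : 0 ≤ c) (hz : r z < 0)
    (hL : c * ‖X‖ ^ 2 ≤ leviQuad r z X) (hX : modelNormSq r z X = 1) (hs0 : 0 ≤ s) (hs : s < 1)
    {ζ : ℂ} (hζ : ζ ∈ ball (0 : ℂ) 1) :
    c * (1 - s) ^ 2 * ‖siegelDisc s (wirtinger (fderiv ℝ r z) X / ((-r z : ℝ) : ℂ)) X ζ‖ ^ 2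
      ≤ -r z := by
  have hx := norm_wirtinger_div_le_one hz (le_trans (by positivity) hL) hX
  have := sub_pos.2 hs
  calc _ ≤ c * (1 - s) ^ 2 * ((1 - s)⁻¹ * ‖X‖) ^ 2 := by
        gcongr
        exact norm_siegelDisc_le hs0 hs hx hζ
    _ = c * ‖X‖ ^ 2 := by field_simp
    _ ≤ -r z := mul_norm_sq_le_of_modelNormSq_eq_one hz hL hX

theorem two_mul_re_wirtinger_siegelDisc_add_leviQuad_le (hr : ContDiffAt ℝ 2 r z) (hz : r z < 0)
    (hL : 0 ≤ leviQuad r z X) (hX : modelNormSq r z X = 1) (hs0 : 0 ≤ s) (hs : s < 1) {ζ : ℂ}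
    (hζ : ζ ∈ ball (0 : ℂ) 1) :
    let w := siegelDisc s (wirtinger (fderiv ℝ r z) X / ((-r z : ℝ) : ℂ)) X ζ
    r z + 2 * (wirtinger (fderiv ℝ r z) w).re + leviQuad r z w ≤ r z * ((1 - s ^ 2) / 4) := by
  have hδ : 0 < -r z := neg_pos.2 hz
  have hmoebius := one_sub_sq_div_four_le (norm_wirtinger_div_le_one hz hL hX)
    (norm_ofReal_mul_le hs0 hζ) hs
  set x := wirtinger (fderiv ℝ r z) X / ((-r z : ℝ) : ℂ) with hx
  set m := s * ζ / (1 + x * (s * ζ))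
  have hax : wirtinger (fderiv ℝ r z) X = ((-r z : ℝ) : ℂ) * x :=
    (mul_div_cancel₀ _ (Complex.ofReal_ne_zero.2 hδ.ne')).symm
  have hLx : leviQuad r z X = -r z * (1 - ‖x‖ ^ 2) := by
    have hnorm : ‖x‖ ^ 2 + leviQuad r z X / -r z = 1 := by
      rw [← hX, modelNormSq, hx, norm_div, div_pow, Complex.norm_real, norm_neg,
        Real.norm_eq_abs, sq_abs]
    rw [← eq_sub_iff_add_eq', div_eq_iff hδ.ne'] at hnorm
    rw [hnorm, mul_comm]
  have hlin : (wirtinger (fderiv ℝ r z) (m • X)).re = -r z * (x * m).re := by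
    rw [map_smul, smul_eq_mul, hax, ← Complex.re_ofReal_mul]
    ring_nf
  change r z + 2 * (wirtinger (fderiv ℝ r z) (m • X)).re + leviQuad r z (m • X) ≤ _
  rw [leviQuad_smul hr, hlin, hLx]
  nlinarith

theorem IsDefiningFunctionAt.exists_wirtinger_fderiv_eq_one (h : IsDefiningFunctionAt Ω r p) :
    ∃ N, wirtinger (fderiv ℝ r p) N = 1 := by
  obtain ⟨N, hN⟩ := DFunLike.ne_iff.1 (wirtinger_ne_zero h.fderiv_ne_zero)
  exact ⟨(wirtinger (fderiv ℝ r p) N)⁻¹ • N, by rw [map_smul, smul_eq_mul, inv_mul_cancel₀ hN]⟩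

theorem IsStrictlyPshDefiningFunctionAt.eventually_exists_disc_deriv_eq_smul
    (h : IsStrictlyPshDefiningFunctionAt Ω r p) (hs0 : 0 < s) (hs : s < 1) :
    ∀ᶠ z in 𝓝 p, z ∈ Ω → ∀ X, modelNormSq r z X = 1 →
      ∃ φ : ℂ → E, DifferentiableOn ℂ φ (ball 0 1) ∧ MapsTo φ (ball 0 1) Ω ∧ φ 0 = z ∧
        deriv φ 0 = (s : ℂ) • X := by
  obtain ⟨c, hc, hL⟩ := h.exists_pos_eventually_le_leviQuad
  obtain ⟨N, hN⟩ := h.exists_wirtinger_fderiv_eq_one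
  have := sub_pos.2 hs
  have hs2 : 0 < 1 - s ^ 2 := sub_pos.2 (pow_lt_one₀ hs0.le hs two_ne_zero)
  set S := holomorphicHessian (fderiv ℝ (fderiv ℝ r) p)
  have hε : 0 < c * (1 - s) ^ 2 * ((1 - s ^ 2) / 8) := by positivity
  obtain ⟨R, hR, hexp⟩ := Metric.eventually_nhds_iff_ball.1
    ((eventually_abs_sub_quadShear_le h.contDiffAt hN hε).and
      ((tendsto_add_quadShear S N p).eventually h.mem_iff))
  have hsmall : ∀ᶠ z in 𝓝 p, -r z < c * (1 - s) ^ 2 * R ^ 2 :=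
    h.contDiffAt.continuousAt.neg.eventually_lt_const (by
      rw [Pi.neg_apply, h.apply_self, neg_zero]
      positivity)
  filter_upwards [hL, h.eventually_contDiffAt, h.mem_iff, ball_mem_nhds p hR, hsmall]
    with z hLz hr hmem hzR hzs hzΩ X hX
  have hz := hmem.1 hzΩ
  have hL0 : 0 ≤ leviQuad r z X := le_trans (by positivity) (hLz X)
  have hx := norm_wirtinger_div_le_one hz hL0 hX
  set x := wirtinger (fderiv ℝ r z) X / ((-r z : ℝ) : ℂ)
  set D := siegelDisc s x X
  have hD : ∀ ζ ∈ ball (0 : ℂ) 1, c * (1 - s) ^ 2 * ‖D ζ‖ ^ 2 ≤ -r z :=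
    fun ζ hζ => mul_norm_siegelDisc_sq_le hc.le hz (hLz X) hX hs0.le hs hζ
  have hshear := (hasFDerivAt_quadShear_zero S N).comp_hasDerivAt_of_eq 0
    (hasDerivAt_siegelDisc_zero s x X) (siegelDisc_zero s x X).symm
  refine ⟨fun ζ => z + quadShear S N (D ζ), ?_, fun ζ hζ => ?_, ?_, (hshear.const_add z).deriv⟩
  · exact ((differentiable_quadShear S N).comp_differentiableOn
      (differentiableOn_siegelDisc hs0.le hs hx)).const_add z
  · have hDR : D ζ ∈ ball 0 R := by
      rw [mem_ball_zero_iff]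
      exact lt_of_pow_lt_pow_left₀ 2 hR.le
        (lt_of_mul_lt_mul_left ((hD ζ hζ).trans_lt hzs) (by positivity))
    obtain ⟨hle, hmemD⟩ := hexp (z, D ζ) (ball_prod_same p (0 : E) R ▸ ⟨hzR, hDR⟩)
    refine hmemD.2 ?_
    have model := two_mul_re_wirtinger_siegelDisc_add_leviQuad_le hr hz hL0 hX hs0.le hs hζ
    have error := mul_le_mul_of_nonneg_right (hD ζ hζ) (show 0 ≤ (1 - s ^ 2) / 8 by positivity)
    nlinarith [(abs_le.1 hle).2]
  · simp only [D, siegelDisc_zero, quadShear_zero, add_zero]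

theorem IsStrictlyPshDefiningFunctionAt.eventually_exists_disc_smul_deriv_eq
    (h : IsStrictlyPshDefiningFunctionAt Ω r p) (hs0 : 0 < s) (hs : s < 1) :
    ∀ᶠ z in 𝓝 p, z ∈ Ω → ∀ X, ∃ (α : ℂ) (φ : ℂ → E), DifferentiableOn ℂ φ (ball 0 1) ∧
      MapsTo φ (ball 0 1) Ω ∧ φ 0 = z ∧ α • deriv φ 0 = X ∧ ‖α‖ = s⁻¹ * √(modelNormSq r z X) := by
  filter_upwards [h.eventually_exists_disc_deriv_eq_smul hs0 hs, h.eventually_contDiffAt,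
    h.eventually_modelNormSq_pos] with z hdisc hr hpos hz X
  rcases eq_or_ne X 0 with rfl | hX
  · have hzero : modelNormSq r z (0 : E) = 0 := by
      simpa using modelNormSq_smul hr 0 (0 : E)
    exact ⟨0, fun _ => z, differentiableOn_const z, fun _ _ => hz, rfl, zero_smul _ _,
      by simp [hzero]⟩
  set m := √(modelNormSq r z X)
  have hm : 0 < m := Real.sqrt_pos.2 (hpos hz X hX)
  obtain ⟨φ, hφ, hmaps, hφ0, hderiv⟩ := hdisc hz ((m : ℂ)⁻¹ • X) (by
    rw [modelNormSq_smul hr, norm_inv, Complex.norm_real, Real.norm_of_nonneg hm.le, inv_pow,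
      Real.sq_sqrt (hpos hz X hX).le, inv_mul_cancel₀ (hpos hz X hX).ne'])
  refine ⟨(s : ℂ)⁻¹ * m, φ, hφ, hmaps, hφ0, ?_, ?_⟩
  · have hsC : (s : ℂ) ≠ 0 := Complex.ofReal_ne_zero.2 hs0.ne'
    have hmC : (m : ℂ) ≠ 0 := Complex.ofReal_ne_zero.2 hm.ne'
    rw [hderiv, mul_smul, smul_comm (m : ℂ), inv_smul_smul₀ hsC, smul_inv_smul₀ hmC]
  · rw [norm_mul, norm_inv, Complex.norm_real, Complex.norm_real, Real.norm_of_nonneg hs0.le,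
      Real.norm_of_nonneg hm.le]

end UpperEstimate

section KobayashiMetric

variable {Ω : Set (Cn n)} {r : Cn n → ℝ} {p z X : Cn n} {s : ℝ}

theorem kobayashi_le_norm {α : ℂ} {φ : ℂ → Cn n} (hφ : DifferentiableOn ℂ φ (ball 0 1))
    (hmaps : MapsTo φ (ball 0 1) Ω) (hα : α • deriv φ 0 = X) : kobayashi Ω (φ 0) X ≤ ‖α‖ := by
  refine csInf_le ⟨0, ?_⟩ ⟨α, φ, hφ, hmaps, rfl, hα, rfl⟩
  rintro - ⟨β, -, -, -, -, -, rfl⟩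
  exact norm_nonneg β

namespace IsStrictlyPshDefiningFunctionAt

theorem eventually_kobayashi_le (h : IsStrictlyPshDefiningFunctionAt Ω r p) (hs0 : 0 < s)
    (hs : s < 1) :
    ∀ᶠ z in 𝓝 p, z ∈ Ω → ∀ X, kobayashi Ω z X ≤ s⁻¹ * √(modelNormSq r z X) := by
  filter_upwards [h.eventually_exists_disc_smul_deriv_eq hs0 hs] with z hdisc hz X
  obtain ⟨α, φ, hφ, hmaps, rfl, hα, hnorm⟩ := hdisc hz X
  exact hnorm ▸ kobayashi_le_norm hφ hmaps hα

theorem eventually_le_kobayashi (h : IsStrictlyPshDefiningFunctionAt Ω r p) (hs0 : 0 < s)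
    (hs : s < 1) :
    ∀ᶠ z in 𝓝 p, z ∈ Ω → ∀ X, s ^ 2 * √(modelNormSq r z X) ≤ kobayashi Ω z X := by
  filter_upwards [h.eventually_pow_four_mul_modelNormSq_deriv_le_one hs0 hs,
    h.eventually_exists_disc_smul_deriv_eq hs0 hs, h.eventually_contDiffAt]
    with z hle hdisc hr hz X
  -- The infimum of the empty set is `0`, so a lower bound needs some competing disc.
  obtain ⟨α, φ, hφ, hmaps, hφ0, hα, -⟩ := hdisc hz X
  refine le_csInf ⟨‖α‖, α, φ, hφ, hmaps, hφ0, hα, rfl⟩ ?_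
  rintro - ⟨β, ψ, hψ, hmaps', hψ0, rfl, rfl⟩
  rw [modelNormSq_smul hr, Real.sqrt_mul (sq_nonneg _), Real.sqrt_sq (norm_nonneg β), mul_left_comm]
  refine mul_le_of_le_one_right (norm_nonneg β) ?_
  rw [← Real.sqrt_sq (sq_nonneg s), ← pow_mul, ← Real.sqrt_mul (by positivity), Real.sqrt_le_one]
  exact hle ψ hψ hmaps' hψ0

end IsStrictlyPshDefiningFunctionAt

end KobayashiMetric

section QuadModification

/-- The defining function `r + A r²`. For large `A` its Levi form is positive also in the normal
direction, while `r` and `r + A r²` have asymptotically equal model metrics at the boundary. -/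
def quadModification {E : Type*} (A : ℝ) (r : E → ℝ) (z : E) : ℝ :=
  r z + A * r z ^ 2

theorem quadModification_eq_mul {E : Type*} (A : ℝ) (r : E → ℝ) (z : E) :
    quadModification A r z = r z * (1 + A * r z) := by
  rw [quadModification]
  ring

section Real

variable {E : Type*} [NormedAddCommGroup E] [NormedSpace ℝ E] {Ω : Set E} {A : ℝ} {r : E → ℝ}
  {p z : E}

theorem fderiv_quadModification (hr : DifferentiableAt ℝ r z) :
    fderiv ℝ (quadModification A r) z = (1 + 2 * A * r z) • fderiv ℝ r z := by
  have h : HasFDerivAt (quadModification A r) _ z :=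
    hr.hasFDerivAt.add ((hr.hasFDerivAt.pow 2).const_mul A)
  rw [h.fderiv]
  module

theorem fderiv_fderiv_quadModification_apply (hr : ContDiffAt ℝ 2 r z) (X Y : E) :
    fderiv ℝ (fderiv ℝ (quadModification A r)) z X Y
      = (1 + 2 * A * r z) * fderiv ℝ (fderiv ℝ r) z X Y
        + 2 * A * fderiv ℝ r z X * fderiv ℝ r z Y := by
  have heq : fderiv ℝ (quadModification A r) =ᶠ[𝓝 z] fun w => (1 + 2 * A * r w) • fderiv ℝ r w := by
    filter_upwards [hr.eventually (by simp)] with w hw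
    exact fderiv_quadModification (hw.differentiableAt (by simp))
  have hcoef := ((hr.differentiableAt (by simp)).hasFDerivAt.const_mul (2 * A)).const_add 1
  have hdr := ((hr.fderiv_right (m := 1) (by norm_num)).differentiableAt one_ne_zero).hasFDerivAt
  have hsmul : HasFDerivAt (fun w => (1 + 2 * A * r w) • fderiv ℝ r w) _ z := hcoef.smul hdr
  rw [heq.fderiv_eq, hsmul.fderiv]
  simp

theorem isDefiningFunctionAt_quadModification (h : IsDefiningFunctionAt Ω r p) (A : ℝ) :
    IsDefiningFunctionAt Ω (quadModification A r) p where
  contDiffAt := h.contDiffAt.add (contDiffAt_const.mul (h.contDiffAt.pow 2))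
  apply_self := by simp [quadModification, h.apply_self]
  mem_iff := by
    have hpos : ∀ᶠ z in 𝓝 p, 0 < 1 + A * r z :=
      (continuousAt_const.add
        (continuousAt_const.mul h.contDiffAt.continuousAt)).eventually_const_lt
        (by simp [h.apply_self])
    filter_upwards [h.mem_iff, hpos] with z hz hz1
    rw [hz, quadModification_eq_mul, ← neg_pos, ← neg_pos (a := r z * _), ← neg_mul,
      mul_pos_iff_of_pos_right hz1]
  fderiv_ne_zero := by
    rw [fderiv_quadModification (h.contDiffAt.differentiableAt (by simp)), h.apply_self]
    simpa using h.fderiv_ne_zero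

end Real

variable {E : Type*} [NormedAddCommGroup E] [NormedSpace ℂ E] [NormedSpace ℝ E]
  [IsScalarTower ℝ ℂ E] {Ω : Set E} {A : ℝ} {r : E → ℝ} {p z : E}

theorem norm_wirtinger_fderiv_quadModification_sq (hr : DifferentiableAt ℝ r z) (X : E) :
    ‖wirtinger (fderiv ℝ (quadModification A r) z) X‖ ^ 2
      = (1 + 2 * A * r z) ^ 2 * ‖wirtinger (fderiv ℝ r z) X‖ ^ 2 := by
  rw [fderiv_quadModification hr, map_smul, smul_apply, norm_smul, mul_pow, Real.norm_eq_abs,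
    sq_abs]

theorem leviQuad_quadModification (hr : ContDiffAt ℝ 2 r z) (X : E) :
    leviQuad (quadModification A r) z X
      = (1 + 2 * A * r z) * leviQuad r z X + 2 * A * ‖wirtinger (fderiv ℝ r z) X‖ ^ 2 := by
  simp only [leviQuad, leviBilin_apply, fderiv_fderiv_quadModification_apply hr, norm_wirtinger_sq]
  ring

theorem IsDefiningFunctionAt.exists_isStrictlyPshDefiningFunctionAt [FiniteDimensional ℂ E]
    (h : IsDefiningFunctionAt Ω r p)
    (hpos : ∀ X, X ≠ 0 → wirtinger (fderiv ℝ r p) X = 0 → 0 < leviQuad r p X) :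
    ∃ A ≥ 0, IsStrictlyPshDefiningFunctionAt Ω (quadModification A r) p := by
  obtain ⟨A, hA, c, hc, hle⟩ := exists_forall_mul_norm_sq_le_leviBilin_add
    (h.contDiffAt.isSymmSndFDerivAt (by simp)) hpos
  refine ⟨A / 2, by positivity, isDefiningFunctionAt_quadModification h _, c, hc, fun X => ?_⟩
  rw [leviQuad_quadModification h.contDiffAt, h.apply_self, mul_zero, add_zero, one_mul,
    mul_div_cancel₀ A two_ne_zero]
  exact hle X

theorem modelNormSq_quadModification (hr : ContDiffAt ℝ 2 r z) (hz : r z ≠ 0)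
    (hA : 1 + A * r z ≠ 0) (X : E) :
    modelNormSq (quadModification A r) z X
      = (1 + 2 * A * r z) / (1 + A * r z) * modelNormSq r z X
        - A * r z / (1 + A * r z) ^ 2 * (‖wirtinger (fderiv ℝ r z) X‖ ^ 2 / r z ^ 2) := by
  rw [modelNormSq, modelNormSq, leviQuad_quadModification hr,
    norm_wirtinger_fderiv_quadModification_sq (hr.differentiableAt (by simp)),
    quadModification_eq_mul]
  field_simp
  ring

theorem mul_le_and_mul_le_of_eq_add {M M' P t s : ℝ} (ht0 : 0 ≤ t) (ht : 2 * t < 1)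
    (hs0 : 0 ≤ s) (hs : s ≤ 1 - t / (1 - 2 * t) ^ 2) (hP : 0 ≤ P)
    (hM' : M' = (1 - 2 * t) / (1 - t) * M + t / (1 - t) ^ 2 * P)
    (hle : ((1 - 2 * t) / (1 - t)) ^ 2 * P ≤ M') : s * M ≤ M' ∧ s * M' ≤ M := by
  have h1 : 0 < 1 - t := by linarith
  have h2 : 0 < 1 - 2 * t := by linarith
  set β := (1 - 2 * t) / (1 - t) with hβ
  have hβ1 : β ≤ 1 := (div_le_one h1).2 (by linarith)
  have hsβ : s ≤ β := by
    have hβeq : β = 1 - t / (1 - t) := by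
      rw [hβ, eq_sub_iff_add_eq, ← add_div, div_eq_one_iff_eq h1.ne']
      ring
    rw [hβeq]
    exact hs.trans
      (sub_le_sub_left (div_le_div_of_nonneg_left ht0 (by positivity) (by nlinarith)) 1)
  have hM'0 : 0 ≤ M' := le_trans (by positivity) hle
  have hdefect : t / (1 - t) ^ 2 * P ≤ t / (1 - 2 * t) ^ 2 * M' :=
    calc t / (1 - t) ^ 2 * P = t / (1 - 2 * t) ^ 2 * (β ^ 2 * P) := by
          rw [← mul_assoc, hβ, div_pow, div_mul_div_cancel₀ (pow_ne_zero 2 h2.ne')]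
      _ ≤ t / (1 - 2 * t) ^ 2 * M' := by gcongr
  have hdefect0 : 0 ≤ t / (1 - t) ^ 2 * P := by positivity
  have hsM' : s * M' ≤ β * M := by nlinarith
  have hM0 : 0 ≤ M := nonneg_of_mul_nonneg_right ((mul_nonneg hs0 hM'0).trans hsM')
    (by positivity : 0 < β)
  constructor <;> nlinarith

theorem IsDefiningFunctionAt.eventually_mul_modelNormSq_le (h : IsDefiningFunctionAt Ω r p)
    (hA : 0 ≤ A) (hpsh : IsStrictlyPshDefiningFunctionAt Ω (quadModification A r) p) {s : ℝ}
    (hs0 : 0 ≤ s) (hs : s < 1) :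
    ∀ᶠ z in 𝓝 p, z ∈ Ω → ∀ X, s * modelNormSq r z X ≤ modelNormSq (quadModification A r) z X ∧
      s * modelNormSq (quadModification A r) z X ≤ modelNormSq r z X := by
  obtain ⟨c, hc, hL⟩ := hpsh.exists_pos_eventually_le_leviQuad
  have htend : Tendsto (fun z => -(A * r z)) (𝓝 p) (𝓝 0) := by
    simpa [h.apply_self] using (h.contDiffAt.continuousAt.tendsto.const_mul A).neg
  have hdefect : ContinuousAt (fun t : ℝ => 1 - t / (1 - 2 * t) ^ 2) 0 := by
    fun_prop (disch := norm_num)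
  filter_upwards [hL, h.eventually_contDiffAt, h.mem_iff, hpsh.mem_iff,
    htend.eventually_lt_const (show (0 : ℝ) < 1 / 2 by norm_num),
    htend.eventually (hdefect.eventually_const_le (u := s) (by simpa))]
    with z hLz hr hmem hmem' ht hst hz X
  have hrz := hmem.1 hz
  have ht0 : 0 ≤ -(A * r z) := neg_nonneg.2 (mul_nonpos_of_nonneg_of_nonpos hA hrz.le)
  have hden : 1 + A * r z ≠ 0 := by linarith
  refine mul_le_and_mul_le_of_eq_add ht0 (by linarith) hs0 hst
    (P := ‖wirtinger (fderiv ℝ r z) X‖ ^ 2 / r z ^ 2) (by positivity) ?_ ?_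
  · rw [modelNormSq_quadModification hr hrz.ne hden]
    ring
  · have hlevi : 0 ≤ leviQuad (quadModification A r) z X / -quadModification A r z :=
      div_nonneg (le_trans (by positivity) (hLz X)) (neg_nonneg.2 (hmem'.1 hz).le)
    refine le_trans (le_of_eq ?_) (le_add_of_nonneg_right hlevi)
    rw [norm_wirtinger_fderiv_quadModification_sq (hr.differentiableAt (by simp)),
      quadModification_eq_mul, div_pow, div_mul_div_comm, mul_pow, mul_comm (r z ^ 2)]
    ring_nf

end QuadModification

section Estimate

variable {Ω : Set (Cn n)} {r ρ : Cn n → ℝ} {p z : Cn n}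

theorem cderiv_eq_wirtinger (r : Cn n → ℝ) (z X : Cn n) :
    cderiv r z X = wirtinger (fderiv ℝ r z) X :=
  (wirtinger_apply _ _).symm

theorem leviForm_eq_leviQuad (hr : ContDiffAt ℝ 2 r z) (X : Cn n) :
    leviForm r z X = leviQuad r z X := by
  have happly (Y : Cn n) :
      fderiv ℝ (fun w => fderiv ℝ r w Y) z Y = fderiv ℝ (fderiv ℝ r) z Y Y := by
    have hdr := ((hr.fderiv_right (m := 1) (by norm_num)).differentiableAt one_ne_zero).hasFDerivAt
    rw [(hdr.clm_apply (hasFDerivAt_const Y z)).fderiv]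
    simp
  rw [leviForm, happly, happly, leviQuad, leviBilin_apply]

theorem leviForm_congr {s : Cn n → ℝ} (h : r =ᶠ[𝓝 z] s) (X : Cn n) :
    leviForm r z X = leviForm s z X := by
  have hfderiv (Y : Cn n) : (fun w => fderiv ℝ r w Y) =ᶠ[𝓝 z] fun w => fderiv ℝ s w Y := by
    filter_upwards [h.fderiv (𝕜 := ℝ)] with w hw
    rw [hw]
  rw [leviForm, leviForm, (hfderiv X).fderiv_eq, (hfderiv (Complex.I • X)).fderiv_eq]

theorem Mfun_eq_sqrt_modelNormSq (hr : ContDiffAt ℝ 2 r z) (hdist : bdist Ω =ᶠ[𝓝 z] -r)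
    (X : Cn n) : Mfun Ω z X = √(modelNormSq r z X) := by
  have hneg : (fun w => -bdist Ω w) =ᶠ[𝓝 z] r := by
    filter_upwards [hdist] with w hw
    rw [hw, Pi.neg_apply, neg_neg]
  rw [Mfun, leviForm_congr hneg, leviForm_eq_leviQuad hr, cderiv_eq_wirtinger, hdist.fderiv_eq,
    fderiv_neg, map_neg, neg_apply, norm_neg, hdist.self_of_nhds, Pi.neg_apply, neg_sq, modelNormSq]

theorem leviQuad_pos_of_eq_smul {l : ℝ} (hl : 0 < l)
    (hgrad : fderiv ℝ r p = l • fderiv ℝ ρ p)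
    (hhess : ∀ X Y, fderiv ℝ ρ p X = 0 → fderiv ℝ ρ p Y = 0 →
      fderiv ℝ (fderiv ℝ r) p X Y = l * fderiv ℝ (fderiv ℝ ρ) p X Y)
    (hpos : ∀ X, X ≠ 0 → wirtinger (fderiv ℝ ρ p) X = 0 → 0 < leviQuad ρ p X)
    (X : Cn n) (hX : X ≠ 0) (htan : wirtinger (fderiv ℝ r p) X = 0) : 0 < leviQuad r p X := by
  rw [hgrad, map_smul, smul_apply, smul_eq_zero_iff_right hl.ne'] at htan
  obtain ⟨h, hI⟩ := (wirtinger_apply_eq_zero_iff _ X).1 htan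
  have hlevi : leviQuad r p X = l * leviQuad ρ p X := by
    rw [leviQuad, leviQuad, leviBilin_apply, leviBilin_apply, hhess X X h h, hhess _ _ hI hI]
    ring
  exact hlevi ▸ mul_pos hl (hpos X hX htan)

theorem IsStrictPscPtC2.exists_isDefiningFunctionAt (hp : IsStrictPscPtC2 Ω p) :
    ∃ ρ, IsDefiningFunctionAt Ω ρ p ∧
      ∀ X, X ≠ 0 → wirtinger (fderiv ℝ ρ p) X = 0 → 0 < leviQuad ρ p X := by
  obtain ⟨hpΩ, W, hW, hpW, ρ, hρ, hdef, hgrad, hlevi⟩ := hp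
  have hρp : ContDiffAt ℝ 2 ρ p := hρ.contDiffAt (hW.mem_nhds hpW)
  have hmem : ∀ᶠ z in 𝓝 p, z ∈ Ω ↔ ρ z < 0 := by
    filter_upwards [hW.mem_nhds hpW] with z hz
    simpa [hz] using Set.ext_iff.1 hdef z
  refine ⟨ρ, ⟨hρp, apply_eq_zero_of_mem_frontier hρp.continuousAt hmem hpΩ, hmem,
    hgrad p ⟨hpΩ, hpW⟩⟩, fun X hX htan => ?_⟩
  rw [← leviForm_eq_leviQuad hρp]
  exact hlevi p ⟨hpΩ, hpW⟩ X hX (by rw [cderiv_eq_wirtinger, htan])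

theorem IsStrictPscPtC2.exists_bdist_eq_neg (hp : IsStrictPscPtC2 Ω p) :
    ∃ r, IsDefiningFunctionAt Ω r p ∧ (∀ᶠ z in 𝓝 p, z ∈ Ω → bdist Ω =ᶠ[𝓝 z] -r) ∧
      ∀ X, X ≠ 0 → wirtinger (fderiv ℝ r p) X = 0 → 0 < leviQuad r p X := by
  obtain ⟨ρ, hρ, hpos⟩ := hp.exists_isDefiningFunctionAt
  obtain ⟨r, hr, hdist, l, hl, hgrad, hhess⟩ := exists_isDefiningFunctionAt_infDist_frontier hρ
  refine ⟨r, hr, ?_, leviQuad_pos_of_eq_smul hl hgrad hhess hpos⟩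
  filter_upwards [hdist.eventually_nhds, hr.mem_iff.eventually_nhds, hr.eventually_contDiffAt]
    with z hdistz hmem hrz hz
  have hneg : ∀ᶠ w in 𝓝 z, r w < 0 :=
    hrz.continuousAt.eventually_lt_const (hmem.self_of_nhds.1 hz)
  filter_upwards [hdistz, hmem, hneg] with w hw hmemw hwneg using hw (hmemw.2 hwneg)

theorem exists_one_sub_le_pow_and_inv_le_one_add {η : ℝ} (hη : 0 < η) :
    ∃ s : ℝ, 0 < s ∧ s < 1 ∧ 1 - η ≤ s ^ 3 ∧ (s ^ 2)⁻¹ ≤ 1 + η := by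
  have hpow : ContinuousAt (fun s : ℝ => s ^ 3) 1 := by fun_prop
  have hinv : ContinuousAt (fun s : ℝ => (s ^ 2)⁻¹) 1 := by fun_prop (disch := norm_num)
  have hnear : ∀ᶠ s : ℝ in 𝓝 1, 0 < s ∧ 1 - η ≤ s ^ 3 ∧ (s ^ 2)⁻¹ ≤ 1 + η :=
    (eventually_gt_nhds one_pos).and ((hpow.eventually_const_le (by simpa)).and
      (hinv.eventually_le_const (by simpa)))
  obtain ⟨s, ⟨hs0, hlow, hup⟩, hs⟩ :=
    ((hnear.filter_mono nhdsWithin_le_nhds).and (self_mem_nhdsWithin (s := Iio 1))).exists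
  exact ⟨s, hs0, hs, hlow, hup⟩

theorem IsDefiningFunctionAt.eventually_le_kobayashi_and_kobayashi_le
    (h : IsDefiningFunctionAt Ω r p)
    (hpos : ∀ X, X ≠ 0 → wirtinger (fderiv ℝ r p) X = 0 → 0 < leviQuad r p X) {s : ℝ}
    (hs0 : 0 < s) (hs : s < 1) :
    ∀ᶠ z in 𝓝 p, z ∈ Ω → ∀ X, s ^ 3 * √(modelNormSq r z X) ≤ kobayashi Ω z X ∧
      kobayashi Ω z X ≤ (s ^ 2)⁻¹ * √(modelNormSq r z X) := by
  obtain ⟨A, hA, hpsh⟩ := h.exists_isStrictlyPshDefiningFunctionAt hpos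
  filter_upwards [hpsh.eventually_le_kobayashi hs0 hs, hpsh.eventually_kobayashi_le hs0 hs,
    h.eventually_mul_modelNormSq_le hA hpsh (sq_nonneg s) (pow_lt_one₀ hs0.le hs two_ne_zero)]
    with z hle hge hcomp hz X
  obtain ⟨hlower, hupper⟩ := hcomp hz X
  set M := modelNormSq r z X
  set M' := modelNormSq (quadModification A r) z X
  have hMM' : s * √M ≤ √M' := by
    simpa [Real.sqrt_mul, Real.sqrt_sq hs0.le, sq_nonneg] using Real.sqrt_le_sqrt hlower
  have hM'M : s * √M' ≤ √M := by
    simpa [Real.sqrt_mul, Real.sqrt_sq hs0.le, sq_nonneg] using Real.sqrt_le_sqrt hupper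
  constructor
  · calc s ^ 3 * √M = s ^ 2 * (s * √M) := by ring
      _ ≤ s ^ 2 * √M' := by gcongr
      _ ≤ kobayashi Ω z X := hle hz X
  · calc kobayashi Ω z X ≤ s⁻¹ * √M' := hge hz X
      _ ≤ s⁻¹ * (s⁻¹ * √M) := by
        gcongr
        exact (le_inv_mul_iff₀ hs0).2 hM'M
      _ = (s ^ 2)⁻¹ * √M := by ring

theorem kobayashi_estimate_C2_general {η : ℝ} (hp : IsStrictPscPtC2 Ω p) (hη : 0 < η) :
    ∀ᶠ z in 𝓝 p, z ∈ Ω → ∀ X, (1 - η) * Mfun Ω z X ≤ kobayashi Ω z X ∧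
      kobayashi Ω z X ≤ (1 + η) * Mfun Ω z X := by
  obtain ⟨r, hr, hdist, hpos⟩ := hp.exists_bdist_eq_neg
  obtain ⟨s, hs0, hs, hlow, hup⟩ := exists_one_sub_le_pow_and_inv_le_one_add hη
  filter_upwards [hdist, hr.eventually_contDiffAt,
    hr.eventually_le_kobayashi_and_kobayashi_le hpos hs0 hs] with z hdistz hrz hκ hz X
  rw [Mfun_eq_sqrt_modelNormSq hrz (hdistz hz)]
  obtain ⟨hlower, hupper⟩ := hκ hz X
  exact ⟨(by gcongr : _ ≤ s ^ 3 * _).trans hlower, hupper.trans (by gcongr)⟩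

end Estimate

/-- Near a `C²`-smooth strictly pseudoconvex boundary point, for every
`η > 0` one has `(1-η)·M(z;X) ≤ κ_Ω(z;X) ≤ (1+η)·M(z;X)` sufficiently close to `p`. -/
theorem kobayashi_estimate_C2 (n : ℕ) (Ω : Set (Cn n)) (hopen : IsOpen Ω) (hconn : IsConnected Ω)
    (p : Cn n) (hp : IsStrictPscPtC2 Ω p) :
    ∀ η : ℝ, 0 < η → ∃ U : Set (Cn n), IsOpen U ∧ p ∈ U ∧
      ∀ z ∈ Ω ∩ U, ∀ X : Cn n,
        (1 - η) * Mfun Ω z X ≤ kobayashi Ω z X ∧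
        kobayashi Ω z X ≤ (1 + η) * Mfun Ω z X := by
  intro η hη
  obtain ⟨U, hU, hUopen, hpU⟩ :=
    _root_.eventually_nhds_iff.1 (kobayashi_estimate_C2_general hp hη)
  exact ⟨U, hUopen, hpU, fun z hz => hU z hz.2 hz.1⟩

end
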